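/- Bland(𝔅_n, π_0, 𝒩_{𝔅_n}) performs at least 2^n − 1 improving switches before terminating. -/

import Mathlib

/-! ## The Markov decision process `𝔅_n` -/

/-- Vertices of the MDP `𝔅_n`: a transportation vertex `t`, a sink `s`, a dummy vertex `d`,
and vertices `a i`, `b i` for `i ∈ {1,…,n}`. -/
inductive BV : Type where
  | t : BV
  | s : BV
  | d : BV
  | a : ℕ → BV
  | b : ℕ → BV
deriving DecidableEq

/-- The vertex `a i` for `i ∈ {1,…,n+1}`, with the convention `a (n+1) = s`. -/
def aN (n i : ℕ) : BV := if i = n + 1 then BV.s else BV.a i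

/-- The vertex `b i` for `i ∈ {1,…,n+1}`, with the convention `b (n+1) = d`. -/
def bN (n i : ℕ) : BV := if i = n + 1 then BV.d else BV.b i

/-- The vertex set of `𝔅_n`. -/
def IsBVertex (n : ℕ) : BV → Prop
  | BV.t => True
  | BV.s => True
  | BV.d => True
  | BV.a i => 1 ≤ i ∧ i ≤ n
  | BV.b i => 1 ≤ i ∧ i ≤ n

/-- The edge relation of `𝔅_n`: travel, enter, skip, board, stay, leave edges,
the edge `(d,s)` and the self-loop `(s,s)`. -/
def BEdge (n : ℕ) (u v : BV) : Prop :=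
  (∃ i, 1 ≤ i ∧ i ≤ n ∧ u = BV.t ∧ v = BV.a i) ∨
  (∃ i, 1 ≤ i ∧ i ≤ n ∧ u = BV.a i ∧ v = BV.b i) ∨
  (∃ i, 1 ≤ i ∧ i ≤ n ∧ u = BV.a i ∧ v = aN n (i + 1)) ∨
  (∃ i, 1 ≤ i ∧ i ≤ n ∧ u = BV.a i ∧ v = BV.t) ∨
  (∃ i, 1 ≤ i ∧ i ≤ n ∧ u = BV.b i ∧ v = bN n (i + 1)) ∨
  (∃ i, 1 ≤ i ∧ i ≤ n ∧ u = BV.b i ∧ v = aN n (i + 1)) ∨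
  (u = BV.d ∧ v = BV.s) ∨ (u = BV.s ∧ v = BV.s)

/-- The reward function of `𝔅_n`: `r(enter i) = 2^i`, `r(stay i) = 3/4`,
`r(board i) = -2^i + 5/4`, and reward `0` on all other edges. -/
def rB (n : ℕ) (u v : BV) : ℚ :=
  match u, v with
  | BV.a i, BV.b j => if i = j then 2 ^ i else 0
  | BV.a i, BV.t => -(2 ^ i) + 5 / 4
  | BV.b i, BV.b j => if j = i + 1 then 3 / 4 else 0
  | BV.b i, BV.d => if i = n then 3 / 4 else 0
  | _, _ => 0

/-- A policy for `𝔅_n` chooses an outgoing edge at every vertex. -/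
def IsBPolicy (n : ℕ) (π : BV → BV) : Prop := ∀ u, IsBVertex n u → BEdge n u (π u)

/-- A policy is weak unichain if it reaches the sink `s` from every vertex. -/
def BWeakUnichain (n : ℕ) (π : BV → BV) : Prop :=
  ∀ u, IsBVertex n u → ∃ k, π^[k] u = BV.s

open Classical in
/-- The value of a vertex `v` w.r.t. a (weak unichain) policy `π`:
the sum of the rewards along the path that `π` takes from `v` to the sink `s`. -/
noncomputable def BVal (n : ℕ) (π : BV → BV) (v : BV) : ℚ :=
  if h : ∃ k, π^[k] v = BV.s then
    ∑ i ∈ Finset.range (Nat.find h), rB n (π^[i] v) (π^[i + 1] v)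
  else 0

/-- The reduced costs of the edge `(u,v)` w.r.t. the policy `π`. -/
noncomputable def zB (n : ℕ) (π : BV → BV) (u v : BV) : ℚ :=
  rB n u v + BVal n π v - BVal n π u

/-- The edge `(u,v)` is an improving switch for `π` if its reduced costs are positive. -/
def BImproving (n : ℕ) (π : BV → BV) (u v : BV) : Prop :=
  BEdge n u v ∧ 0 < zB n π u v

/-- The Bland numbering `𝒩_{𝔅_n}` of the edges of `𝔅_n`. -/
def NB (n : ℕ) (u v : BV) : ℕ :=
  match u, v with
  | BV.t, BV.a i => i
  | BV.a i, BV.b _ => n + 1 + 5 * (i - 1)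
  | BV.a i, BV.a _ => n + 2 + 5 * (i - 1)
  | BV.a i, BV.s => n + 2 + 5 * (i - 1)
  | BV.a i, BV.t => n + 3 + 5 * (i - 1)
  | BV.b i, BV.b _ => n + 4 + 5 * (i - 1)
  | BV.b i, BV.d => n + 4 + 5 * (i - 1)
  | BV.b i, BV.a _ => n + 5 + 5 * (i - 1)
  | BV.b i, BV.s => n + 5 + 5 * (i - 1)
  | BV.d, BV.s => 6 * n + 1
  | BV.s, BV.s => 6 * n + 2
  | _, _ => 0

/-- One step of Bland's policy iteration with edge numbering `N`:
apply the improving switch with the smallest number. -/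
def IsBlandStep (n : ℕ) (N : BV → BV → ℕ) (π π' : BV → BV) : Prop :=
  ∃ u v, BImproving n π u v ∧ (∀ u' v', BImproving n π u' v' → N u v ≤ N u' v') ∧
    π' = Function.update π u v

/-- `BlandReaches n N π ψ` says that Bland's policy iteration started at `π` visits `ψ`. -/
def BlandReaches (n : ℕ) (N : BV → BV → ℕ) : (BV → BV) → (BV → BV) → Prop :=
  Relation.ReflTransGen (IsBlandStep n N)

/-- The canonical policy `π_0` for `0`: `travel 1`, `skip i` and `leave i` are active. -/
def pi0 (n : ℕ) : BV → BV := fun u =>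
  match u with
  | BV.t => BV.a 1
  | BV.a i => aN n (i + 1)
  | BV.b i => aN n (i + 1)
  | BV.d => BV.s
  | BV.s => BV.s

/-- The optimal policy `π_*`: `travel 1`, `enter i` for all `i`, `leave j` for `j < n`,
and `stay n` are active. -/
def piStar (n : ℕ) : BV → BV := fun u =>
  match u with
  | BV.t => BV.a 1
  | BV.a i => BV.b i
  | BV.b i => if i = n then BV.d else BV.a (i + 1)
  | BV.d => BV.s
  | BV.s => BV.s

/-! ## Bits and canonical policies -/

/-- The least significant set bit `ℓ_1(x)` (1-based). -/
noncomputable def lsb (x : ℕ) : ℕ := sInf {i | 1 ≤ i ∧ Nat.testBit x (i - 1)}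

/-- The most significant set bit `m(x)` (1-based). -/
noncomputable def msb1 (x : ℕ) : ℕ := sSup {i | 1 ≤ i ∧ Nat.testBit x (i - 1)}

/-- The least unset bit `ℓ_0(x)` (1-based). -/
noncomputable def lzero (x : ℕ) : ℕ := sInf {i | 1 ≤ i ∧ ¬ Nat.testBit x (i - 1)}

/-- `L_i(x) = max { j ≤ i-2 | x_j = 1 or j = 1 }` (1-based bits). -/
noncomputable def Lfun (i x : ℕ) : ℕ :=
  sSup {j | 1 ≤ j ∧ j ≤ i - 2 ∧ (Nat.testBit x (j - 1) ∨ j = 1)}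

/-- `IsCanonical n x π` says that `π` is the canonical policy `π_x` for `x`. -/
noncomputable def IsCanonical (n x : ℕ) (π : BV → BV) : Prop :=
  IsBPolicy n π ∧
  if x = 0 then
    π BV.t = BV.a 1 ∧
      ∀ i, 1 ≤ i → i ≤ n → π (BV.a i) = aN n (i + 1) ∧ π (BV.b i) = aN n (i + 1)
  else
    π BV.t = BV.a (lsb x) ∧
    π (BV.b (msb1 x)) = aN n (msb1 x + 1) ∧
    (∀ i, msb1 x < i → i ≤ n → π (BV.a i) = aN n (i + 1) ∧ π (BV.b i) = aN n (i + 1)) ∧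
    ∀ i, 1 ≤ i → i ≤ n → Nat.testBit x (i - 1) →
      π (BV.a i) = BV.b i ∧
      (i = 2 → π (BV.b 1) = BV.a 2 ∧ (¬ Nat.testBit x 0 → π (BV.a 1) = BV.a 2)) ∧
      (3 ≤ i → Nat.testBit x (i - 2) → π (BV.b (i - 1)) = BV.a i) ∧
      (3 ≤ i → ¬ Nat.testBit x (i - 2) →
        π (BV.b (i - 1)) = BV.b i ∧ π (BV.a (i - 1)) = BV.a i ∧
        π (BV.b (i - 2)) = BV.a (i - 1) ∧
        (Lfun i x < i - 2 →
          ∀ j, Lfun i x + 1 ≤ j → j ≤ i - 2 →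
            π (BV.a j) = BV.t ∧ π (BV.b (j - 1)) = BV.b j) ∧
        (Lfun i x = 1 → ¬ Nat.testBit x 0 → π (BV.a 1) = BV.t))

/-- Activating a list of edges in a policy, from left to right. -/
def activateList (π : BV → BV) (L : List (BV × BV)) : BV → BV :=
  L.foldl (fun σ e => Function.update σ e.1 e.2) π

/-- The canonical phases w.r.t. an odd number `x` (with `ℓ := ℓ_0(x)`), as a list of edges
to be activated in order. -/
noncomputable def phaseList (n x : ℕ) : List (BV × BV) :=
  let ℓ := lzero x
  (if Nat.testBit x ℓ then [(BV.b ℓ, aN n (ℓ + 1))] else []) ++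
  (if Nat.testBit x ℓ ∨ msb1 x < ℓ then [(BV.b (ℓ - 1), BV.b ℓ)] else []) ++
  [(BV.a ℓ, BV.b ℓ), (BV.t, BV.a ℓ)] ++
  ((List.range (ℓ - 2)).map fun j => (BV.a (j + 1), BV.t)) ++
  [(BV.a (ℓ - 1), BV.a ℓ)] ++
  (((List.range (ℓ - 3)).reverse).map fun j => (BV.b (j + 1), BV.b (j + 2))) ++
  (if ℓ = 2 then [(BV.b 1, BV.a 2)] else [])

/-! ## The Markov decision process `𝔇_n` -/

/-- Vertices of `𝔇_n`: the original vertices (`base`), and for every edge `(v,w)` of `𝔅_n`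
other than the self-loop, the gadget vertices `x v w`, `y v w`, `z v w`. -/
inductive DV : Type where
  | base : BV → DV
  | x : BV → BV → DV
  | y : BV → BV → DV
  | z : BV → BV → DV
deriving DecidableEq

/-- The edges of `𝔅_n` that get replaced by gadgets (all edges except the self-loop `(s,s)`). -/
def DEdgePair (n : ℕ) (v w : BV) : Prop := BEdge n v w ∧ v ≠ BV.s

/-- The vertex set of `𝔇_n`. -/
def IsDVertex (n : ℕ) : DV → Prop
  | DV.base v => IsBVertex n v
  | DV.x v w => DEdgePair n v w
  | DV.y v w => DEdgePair n v w
  | DV.z v w => DEdgePair n v w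

/-- The agent vertices of `𝔇_n` (all vertices except the randomization vertices `y v w`). -/
def IsDAgent (n : ℕ) : DV → Prop
  | DV.base v => IsBVertex n v
  | DV.x v w => DEdgePair n v w
  | DV.y _ _ => False
  | DV.z v w => DEdgePair n v w

/-- The agent edges of `𝔇_n`. -/
def DEdge (n : ℕ) (u u' : DV) : Prop :=
  (∃ v w, DEdgePair n v w ∧
    ((u = DV.base v ∧ u' = DV.x v w) ∨ (u = DV.x v w ∧ u' = DV.base v) ∨
     (u = DV.x v w ∧ u' = DV.y v w) ∨ (u = DV.z v w ∧ u' = DV.base w))) ∨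
  (u = DV.base BV.s ∧ u' = DV.base BV.s)

/-- The reward function of `𝔇_n`: the edge `(z v w, w)` carries the reward of the original
edge `(v,w)`; all other agent edges have reward `0`. -/
def rD (n : ℕ) (u u' : DV) : ℚ :=
  match u, u' with
  | DV.z v w, DV.base w' => if w' = w then rB n v w else 0
  | _, _ => 0

/-- A policy for `𝔇_n` chooses an outgoing agent edge at every agent vertex. -/
def IsDPolicy (n : ℕ) (π : DV → DV) : Prop := ∀ u, IsDAgent n u → DEdge n u (π u)

/-- `IsDVal n p π V` says that `V` satisfies the Bellman equations characterizing the value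
function of the policy `π` for `𝔇_n` with probabilities `p`, with `V s = 0`. -/
def IsDVal (n : ℕ) (p : BV → ℚ) (π : DV → DV) (V : DV → ℚ) : Prop :=
  V (DV.base BV.s) = 0 ∧
  (∀ u, IsDAgent n u → V u = rD n u (π u) + V (π u)) ∧
  (∀ v w, DEdgePair n v w →
    V (DV.y v w) = p v * V (DV.z v w) + (1 - p v) * V (DV.base v))

open Classical in
/-- The value function of a (weak unichain) policy `π` for `𝔇_n`: the unique solution of the
Bellman equations (normalized to `0` outside the vertex set). -/
noncomputable def DVal (n : ℕ) (p : BV → ℚ) (π : DV → DV) : DV → ℚ :=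
  if h : ∃! V : DV → ℚ, IsDVal n p π V ∧ ∀ u, ¬ IsDVertex n u → V u = 0 then
    h.exists.choose
  else fun _ => 0

/-- The reduced costs of an agent edge `(u,u')` of `𝔇_n` w.r.t. the policy `π`. -/
noncomputable def zD (n : ℕ) (p : BV → ℚ) (π : DV → DV) (u u' : DV) : ℚ :=
  rD n u u' + DVal n p π u' - DVal n p π u

/-- An agent edge of `𝔇_n` is an improving switch if its reduced costs are positive. -/
def DImproving (n : ℕ) (p : BV → ℚ) (π : DV → DV) (u u' : DV) : Prop :=
  DEdge n u u' ∧ 0 < zD n p π u u'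

/-- One (agent or positive-probability randomization) step of the process `𝔇_n` under `π`. -/
def DStep (n : ℕ) (p : BV → ℚ) (π : DV → DV) (u u' : DV) : Prop :=
  (IsDAgent n u ∧ u' = π u) ∨
  (∃ v w, DEdgePair n v w ∧ u = DV.y v w ∧
    ((u' = DV.z v w ∧ 0 < p v) ∨ (u' = DV.base v ∧ 0 < 1 - p v)))

/-- A policy for `𝔇_n` is weak unichain if it reaches `s` with probability one from every
vertex, i.e. `s` is reachable via active/positive-probability steps from every vertex. -/
def DWeakUnichain (n : ℕ) (p : BV → ℚ) (π : DV → DV) : Prop :=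
  ∀ u, IsDVertex n u → Relation.ReflTransGen (DStep n p π) u (DV.base BV.s)

/-- The twin policy of a policy `π` for `𝔅_n`: every vertex `v ≠ s` is `π v`-oriented. -/
def twin (π : BV → BV) : DV → DV := fun u =>
  match u with
  | DV.base v => if v = BV.s then DV.base BV.s else DV.x v (π v)
  | DV.x v w => if w = π v then DV.y v w else DV.base v
  | DV.y v w => DV.y v w
  | DV.z _ w => DV.base w

/-- The vertex numbering `𝒩_V` of `𝔅_n`: the order `(t, a 1, b 1, a 2, b 2, …, a n, b n, d, s)`. -/
def NV (n : ℕ) : BV → ℕ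
  | BV.t => 1
  | BV.a i => 2 * i
  | BV.b i => 2 * i + 1
  | BV.d => 2 * n + 2
  | BV.s => 2 * n + 3

/-- The specific probabilities `p_v = 2^{-𝒩_V(v)·(n+5)}`. -/
noncomputable def pSpec (n : ℕ) (v : BV) : ℚ := (2 : ℚ) ^ (-((NV n v * (n + 5) : ℕ) : ℤ))

/-- The set `B(v)` of agent edges of `𝔇_n` belonging to the vertex `v`. -/
def Belongs (n : ℕ) (v : BV) (e : DV × DV) : Prop :=
  ∃ w, DEdgePair n v w ∧
    (e = (DV.x v w, DV.y v w) ∨ e = (DV.base v, DV.x v w) ∨ e = (DV.x v w, DV.base v))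

/-- Applying the improving switch `e` to the policy `π` yields `π'`. -/
def DApply (n : ℕ) (p : BV → ℚ) (π : DV → DV) (e : DV × DV) (π' : DV → DV) : Prop :=
  DImproving n p π e.1 e.2 ∧ π' = Function.update π e.1 e.2

/-- One step of Bland's policy iteration on `𝔇_n` with edge numbering `N`. -/
def IsBlandStepD (n : ℕ) (p : BV → ℚ) (N : DV → DV → ℕ) (π π' : DV → DV) : Prop :=
  ∃ u u', DImproving n p π u u' ∧ (∀ a b, DImproving n p π a b → N u u' ≤ N a b) ∧
    π' = Function.update π u u'

/-- One step of Dantzig's policy iteration on `𝔇_n`: apply an improving switch of maximal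
reduced costs. -/
def DantzigStep (n : ℕ) (p : BV → ℚ) (π π' : DV → DV) : Prop :=
  ∃ u u', DImproving n p π u u' ∧
    (∀ a b, DImproving n p π a b → zD n p π a b ≤ zD n p π u u') ∧
    π' = Function.update π u u'

/-- The finite set of vertices of `𝔅_n`, as a `Finset`. -/
noncomputable def BVSet (n : ℕ) : Finset BV :=
  {BV.t, BV.d, BV.s} ∪ (Finset.Icc 1 n).image BV.a ∪ (Finset.Icc 1 n).image BV.b

/-- The finite set of agent vertices of `𝔇_n`, as a `Finset`. -/
noncomputable def DAgentSet (n : ℕ) : Finset DV := by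
  classical
  exact ((BVSet n).image DV.base) ∪
    (((BVSet n ×ˢ BVSet n).filter fun e => DEdgePair n e.1 e.2).image fun e => DV.x e.1 e.2) ∪
    (((BVSet n ×ˢ BVSet n).filter fun e => DEdgePair n e.1 e.2).image fun e => DV.z e.1 e.2)

/-- The objective of the Largest Increase rule: the sum of the values of all agent vertices. -/
noncomputable def LIobj (n : ℕ) (p : BV → ℚ) (π : DV → DV) : ℚ :=
  ∑ u ∈ DAgentSet n, DVal n p π u

/-- One step of the Largest Increase policy iteration on `𝔇_n`: apply an improving switch
maximizing the sum of all agent vertex values of the resulting policy. -/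
def LIStep (n : ℕ) (p : BV → ℚ) (π π' : DV → DV) : Prop :=
  ∃ u u', DImproving n p π u u' ∧
    (∀ a b, DImproving n p π a b →
      LIobj n p (Function.update π a b) ≤ LIobj n p (Function.update π u u')) ∧
    π' = Function.update π u u'

/-- `N` is a Bland numbering `𝒩_{𝔇_n}` for `𝔇_n`: it is injective on agent edges, the edges
`(x v w, v)` all come first, within each gadget `(x v w, y v w)` precedes `(v, x v w)`,
the gadget blocks are ordered according to `𝒩_{𝔅_n}`, and the self-loop comes last. -/
def IsDBlandNumbering (n : ℕ) (N : DV → DV → ℕ) : Prop :=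
  (∀ u₁ u₂ u₁' u₂', DEdge n u₁ u₂ → DEdge n u₁' u₂' → N u₁ u₂ = N u₁' u₂' →
    u₁ = u₁' ∧ u₂ = u₂') ∧
  (∀ v w v' w', DEdgePair n v w → DEdgePair n v' w' →
    N (DV.x v w) (DV.base v) < N (DV.x v' w') (DV.y v' w')) ∧
  (∀ v w, DEdgePair n v w → N (DV.x v w) (DV.y v w) < N (DV.base v) (DV.x v w)) ∧
  (∀ v w v' w', DEdgePair n v w → DEdgePair n v' w' → NB n v w < NB n v' w' →
    N (DV.base v) (DV.x v w) < N (DV.x v' w') (DV.y v' w')) ∧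
  (∀ v w, DEdgePair n v w → N (DV.base v) (DV.x v w) < N (DV.base BV.s) (DV.base BV.s))

/-! Bland's rule counts in binary on the levels of `𝔅_n`, and the value of `t` controls how long
this takes. The policies run through a few phases: an ordinary counting phase, and, for every carry
into a level `m + 1`, phases in which the levels below `m` are boarded upwards and the edges `stay`
are applied downwards before level `1` is entered again. In each phase the Bland step is forced,
and a bound `K` on the value of `t` grows by at most `2` per step; in the staying phase this needs
the value of a vertex `b` as a look-ahead, since the gain it prepares is only realised once `t` is
redirected. Since `K` starts at `0` and a policy without improving switches has
`Val t ≥ 2 ^ (n + 1) - 2`, at least `2 ^ n - 1` steps are needed. -/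

/-! ### Edges and rewards -/

/-- The three kinds of edges leaving `a i`: `enter i`, `skip i` and `board i`. -/
inductive AChoice
  | enter
  | skip
  | board

/-- The two kinds of edges leaving `b i`: `stay i` and `leave i`. -/
inductive BChoice
  | stay
  | leave

/-- The position of an edge leaving `a i` within the block of five consecutive Bland numbers
belonging to level `i`. -/
def AChoice.rank : AChoice → ℕ
  | enter => 0
  | skip => 1
  | board => 2

/-- The position of an edge leaving `b i` among the two Bland numbers belonging to `b i`. -/
def BChoice.rank : BChoice → ℕ
  | stay => 0
  | leave => 1

/-- The head of the edge leaving `a i` of the given kind. -/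
def aTarget (n i : ℕ) : AChoice → BV
  | .enter => BV.b i
  | .skip => aN n (i + 1)
  | .board => BV.t

/-- The head of the edge leaving `b i` of the given kind. -/
def bTarget (n i : ℕ) : BChoice → BV
  | .stay => bN n (i + 1)
  | .leave => aN n (i + 1)

theorem two_le_two_pow {i : ℕ} (hi : 1 ≤ i) : (2 : ℚ) ≤ 2 ^ i :=
  le_self_pow₀ one_le_two (by omega)

theorem AChoice.rank_injective : Function.Injective AChoice.rank := by
  rintro (_ | _ | _) (_ | _ | _) h <;> first | rfl | cases h

theorem BChoice.rank_injective : Function.Injective BChoice.rank := by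
  rintro (_ | _) (_ | _) h <;> first | rfl | cases h

theorem AChoice.rank_le (x : AChoice) : x.rank ≤ 2 := by
  cases x <;> decide

theorem BChoice.rank_le (y : BChoice) : y.rank ≤ 1 := by
  cases y <;> decide

section Edges

variable {n i : ℕ} {u v : BV}

theorem aN_of_le (h : i ≤ n) : aN n i = BV.a i :=
  if_neg (by omega)

theorem bN_of_le (h : i ≤ n) : bN n i = BV.b i :=
  if_neg (by omega)

theorem aN_last : aN n (n + 1) = BV.s :=
  if_pos rfl

theorem bN_last : bN n (n + 1) = BV.d :=
  if_pos rfl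

theorem bEdge_iff : BEdge n u v ↔
    (∃ i, (1 ≤ i ∧ i ≤ n) ∧ u = BV.t ∧ v = BV.a i) ∨
    (∃ i x, (1 ≤ i ∧ i ≤ n) ∧ u = BV.a i ∧ v = aTarget n i x) ∨
    (∃ i y, (1 ≤ i ∧ i ≤ n) ∧ u = BV.b i ∧ v = bTarget n i y) ∨
    (u = BV.d ∧ v = BV.s) ∨ (u = BV.s ∧ v = BV.s) := by
  constructor
  · rintro (⟨i, h₁, h₂, h⟩ | ⟨i, h₁, h₂, h⟩ | ⟨i, h₁, h₂, h⟩ | ⟨i, h₁, h₂, h⟩ | ⟨i, h₁, h₂, h⟩ |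
      ⟨i, h₁, h₂, h⟩ | h)
    · exact .inl ⟨i, ⟨h₁, h₂⟩, h⟩
    · exact .inr <| .inl ⟨i, .enter, ⟨h₁, h₂⟩, h⟩
    · exact .inr <| .inl ⟨i, .skip, ⟨h₁, h₂⟩, h⟩
    · exact .inr <| .inl ⟨i, .board, ⟨h₁, h₂⟩, h⟩
    · exact .inr <| .inr <| .inl ⟨i, .stay, ⟨h₁, h₂⟩, h⟩
    · exact .inr <| .inr <| .inl ⟨i, .leave, ⟨h₁, h₂⟩, h⟩
    · exact .inr <| .inr <| .inr h
  · rintro (⟨i, ⟨h₁, h₂⟩, h⟩ | ⟨i, x, ⟨h₁, h₂⟩, h⟩ | ⟨i, y, ⟨h₁, h₂⟩, h⟩ | h)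
    · exact .inl ⟨i, h₁, h₂, h⟩
    · cases x
      · exact .inr <| .inl ⟨i, h₁, h₂, h⟩
      · exact .inr <| .inr <| .inl ⟨i, h₁, h₂, h⟩
      · exact .inr <| .inr <| .inr <| .inl ⟨i, h₁, h₂, h⟩
    · cases y
      · exact .inr <| .inr <| .inr <| .inr <| .inl ⟨i, h₁, h₂, h⟩
      · exact .inr <| .inr <| .inr <| .inr <| .inr <| .inl ⟨i, h₁, h₂, h⟩
    · exact .inr <| .inr <| .inr <| .inr <| .inr <| .inr h

theorem bEdge_travel (h : 1 ≤ i ∧ i ≤ n) : BEdge n BV.t (BV.a i) :=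
  bEdge_iff.2 <| .inl ⟨i, h, rfl, rfl⟩

theorem bEdge_aTarget (h : 1 ≤ i ∧ i ≤ n) (x : AChoice) : BEdge n (BV.a i) (aTarget n i x) :=
  bEdge_iff.2 <| .inr <| .inl ⟨i, x, h, rfl, rfl⟩

theorem bEdge_bTarget (h : 1 ≤ i ∧ i ≤ n) (y : BChoice) : BEdge n (BV.b i) (bTarget n i y) :=
  bEdge_iff.2 <| .inr <| .inr <| .inl ⟨i, y, h, rfl, rfl⟩

theorem isBVertex_aN (h : 1 ≤ i) (hi : i ≤ n + 1) : IsBVertex n (aN n i) := by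
  unfold aN
  split_ifs
  exacts [trivial, ⟨h, by omega⟩]

theorem isBVertex_bN (h : 1 ≤ i) (hi : i ≤ n + 1) : IsBVertex n (bN n i) := by
  unfold bN
  split_ifs
  exacts [trivial, ⟨h, by omega⟩]

theorem BEdge.isBVertex_right (h : BEdge n u v) : IsBVertex n v := by
  obtain ⟨i, hi, rfl, rfl⟩ | ⟨i, x, hi, rfl, rfl⟩ | ⟨i, y, hi, rfl, rfl⟩ | ⟨rfl, rfl⟩ |
    ⟨rfl, rfl⟩ := bEdge_iff.1 h
  · exact hi
  · cases x
    exacts [hi, isBVertex_aN (by omega) (by omega), trivial]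
  · cases y
    exacts [isBVertex_bN (by omega) (by omega), isBVertex_aN (by omega) (by omega)]
  · trivial
  · trivial

theorem rB_skip : rB n (BV.a i) (aTarget n i .skip) = 0 := by
  unfold aTarget aN
  split_ifs <;> simp [rB]

theorem rB_enter : rB n (BV.a i) (aTarget n i .enter) = 2 ^ i :=
  if_pos rfl

theorem rB_board : rB n (BV.a i) (aTarget n i .board) = -2 ^ i + 5 / 4 :=
  rfl

theorem rB_leave : rB n (BV.b i) (bTarget n i .leave) = 0 := by
  unfold bTarget aN
  split_ifs <;> simp [rB]

theorem rB_stay : rB n (BV.b i) (bTarget n i .stay) = 3 / 4 := by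
  unfold bTarget bN
  split_ifs with h
  · simp [rB, Nat.succ_injective h]
  · simp [rB]

theorem NB_aTarget (x : AChoice) :
    NB n (BV.a i) (aTarget n i x) = n + 1 + 5 * (i - 1) + x.rank := by
  cases x <;> simp only [aTarget, aN, AChoice.rank]
  · simp [NB]
  · split_ifs <;> simp only [NB] <;> omega
  · simp only [NB]; omega

theorem NB_bTarget (y : BChoice) :
    NB n (BV.b i) (bTarget n i y) = n + 4 + 5 * (i - 1) + y.rank := by
  cases y <;> simp only [bTarget, aN, bN, BChoice.rank] <;> split_ifs <;> simp only [NB] <;> omega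

end Edges

/-! ### Values and weak unichain policies -/

section Values

variable {n : ℕ} {π : BV → BV} {u v : BV}

theorem BVal_sink : BVal n π BV.s = 0 := by
  classical
  have h : ∃ k, π^[k] BV.s = BV.s := ⟨0, rfl⟩
  have hfind : Nat.find h = 0 := (Nat.find_eq_zero h).2 rfl
  rw [BVal, dif_pos h, hfind, Finset.sum_range_zero]

theorem BVal_eq_rB_add (hu : u ≠ BV.s) (h : ∃ k, π^[k] u = BV.s) :
    BVal n π u = rB n u (π u) + BVal n π (π u) := by
  classical
  have h' : ∃ k, π^[k] (π u) = BV.s := by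
    obtain ⟨_ | k, hk⟩ := h
    exacts [absurd hk hu, ⟨k, hk⟩]
  have hfind : Nat.find h = Nat.find h' + 1 := Nat.find_comp_succ h h' hu
  rw [BVal, BVal, dif_pos h, dif_pos h', hfind, Finset.sum_range_succ', add_comm]
  rfl

/-- A potential on the vertices of `𝔅_n` that no edge increases by more than the negative of its
reward; hence no cycle has positive reward. -/
def potential (n : ℕ) : BV → ℚ
  | BV.t => -2
  | BV.a i => -2 ^ i
  | BV.b i => -2 ^ (i + 1)
  | BV.d => -2 ^ (n + 2)
  | BV.s => -2 ^ (n + 2)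

theorem potential_aN_le {i : ℕ} : potential n (aN n i) ≤ -2 ^ i := by
  unfold aN
  split_ifs with h
  · subst h
    exact neg_le_neg (pow_le_pow_right₀ one_le_two (by omega))
  · exact le_rfl

theorem potential_bN {i : ℕ} : potential n (bN n i) = -2 ^ (i + 1) := by
  unfold bN
  split_ifs with h
  · rw [h]; rfl
  · rfl

theorem BEdge.rB_add_potential_le (h : BEdge n u v) :
    rB n u v + potential n v ≤ potential n u := by
  obtain ⟨i, hi, rfl, rfl⟩ | ⟨i, x, hi, rfl, rfl⟩ | ⟨i, y, hi, rfl, rfl⟩ | ⟨rfl, rfl⟩ |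
    ⟨rfl, rfl⟩ := bEdge_iff.1 h
  · have hpow := two_le_two_pow hi.1
    simp only [rB, potential]
    linarith
  · have hpow := two_le_two_pow hi.1
    have hskip := potential_aN_le (n := n) (i := i + 1)
    cases x <;> simp only [rB_enter, rB_skip, rB_board] <;>
      simp only [aTarget, potential, pow_succ] at * <;> linarith
  · have hpow := two_le_two_pow hi.1
    have hleave := potential_aN_le (n := n) (i := i + 1)
    have hstay := potential_bN (n := n) (i := i + 1)
    cases y <;> simp only [rB_stay, rB_leave] <;>
      simp only [bTarget, potential, pow_succ] at * <;> linarith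
  · simp [rB, potential]
  · simp [rB, potential]

theorem iterate_update_of_forall_ne {x : BV} {k : ℕ} (h : ∀ i < k, π^[i] x ≠ u) :
    (Function.update π u v)^[k] x = π^[k] x := by
  induction k with
  | zero => rfl
  | succ k ih =>
    rw [Function.iterate_succ_apply', Function.iterate_succ_apply',
      ih fun i hi => h i (by omega), Function.update_of_ne (h k (by omega))]

theorem IsBPolicy.eq_sink (hπ : IsBPolicy n π) : π BV.s = BV.s := by
  simpa [BEdge] using hπ BV.s trivial

theorem IsBPolicy.isBVertex_iterate (hπ : IsBPolicy n π) (hv : IsBVertex n v) (k : ℕ) :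
    IsBVertex n (π^[k] v) := by
  induction k with
  | zero => exact hv
  | succ k ih =>
    rw [Function.iterate_succ_apply']
    exact (hπ _ ih).isBVertex_right

theorem BWeakUnichain.val_sub_potential_le_iterate (hu : BWeakUnichain n π) (hπ : IsBPolicy n π)
    (hv : IsBVertex n v) (k : ℕ) :
    BVal n π v - potential n v ≤ BVal n π (π^[k] v) - potential n (π^[k] v) := by
  induction k with
  | zero => exact le_rfl
  | succ k ih =>
    have hx := hπ.isBVertex_iterate hv k
    rw [Function.iterate_succ_apply']
    refine ih.trans ?_
    generalize π^[k] v = x at hx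
    by_cases hxs : x = BV.s
    · rw [hxs, hπ.eq_sink]
    · have hval := BVal_eq_rB_add (n := n) hxs (hu x hx)
      have hpot := (hπ x hx).rB_add_potential_le
      linarith

-- Along active edges `Val - potential` does not decrease, while the improving edge `(u, v)`
-- strictly increases it; so the path of `π` from `v` never returns to `u`.
theorem BWeakUnichain.update (hu : BWeakUnichain n π) (hπ : IsBPolicy n π)
    (huv : BImproving n π u v) : BWeakUnichain n (Function.update π u v) := by
  classical
  have hv := huv.1.isBVertex_right
  have hlt : BVal n π u - potential n u < BVal n π v - potential n v := by
    have hz : 0 < rB n u v + BVal n π v - BVal n π u := huv.2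
    linarith [huv.1.rB_add_potential_le]
  have hvs : ∃ k, (Function.update π u v)^[k] v = BV.s := by
    obtain ⟨k, hk⟩ := hu v hv
    refine ⟨k, (iterate_update_of_forall_ne fun i _ hi => ?_).trans hk⟩
    have hle := hu.val_sub_potential_le_iterate hπ hv i
    rw [hi] at hle
    exact hlt.not_ge hle
  intro x hx
  by_cases hxu : ∃ i, π^[i] x = u
  · obtain ⟨k, hk⟩ := hvs
    refine ⟨k + (1 + Nat.find hxu), ?_⟩
    rw [Function.iterate_add_apply, Function.iterate_add_apply,
      iterate_update_of_forall_ne fun i hi => Nat.find_min hxu hi, Nat.find_spec hxu,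
      Function.iterate_one, Function.update_self, hk]
  · obtain ⟨k, hk⟩ := hu x hx
    exact ⟨k, (iterate_update_of_forall_ne fun i _ hi => hxu ⟨i, hi⟩).trans hk⟩

end Values

/-! ### Configurations -/

/-- A policy for `𝔅_n` in coordinates: `travel i` is active at `t` for `i = travel`, and `level i`
records the active edges at `a i` and `b i`. -/
structure Config (n : ℕ) where
  travel : ℕ
  level : ℕ → AChoice × BChoice

namespace Config

variable {n i j : ℕ} {c c' : Config n} {π π' : BV → BV}

/-- The policy described by a configuration. -/
def policy (c : Config n) : BV → BV
  | BV.t => BV.a c.travel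
  | BV.a i => aTarget n i (c.level i).1
  | BV.b i => bTarget n i (c.level i).2
  | BV.d => BV.s
  | BV.s => BV.s

/-- The configuration after applying `travel i`. -/
def setTravel (c : Config n) (i : ℕ) : Config n :=
  ⟨i, c.level⟩

/-- The configuration with the active edges at `a i` and `b i` replaced. -/
def setLevel (c : Config n) (i : ℕ) (l : AChoice × BChoice) : Config n :=
  ⟨c.travel, Function.update c.level i l⟩

theorem setLevel_level_self {l : AChoice × BChoice} : (c.setLevel i l).level i = l :=
  Function.update_self ..

theorem setLevel_level_of_ne {l : AChoice × BChoice} (h : j ≠ i) :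
    (c.setLevel i l).level j = c.level j :=
  Function.update_of_ne h ..

theorem policy_setTravel : (c.setTravel i).policy = Function.update c.policy BV.t (BV.a i) := by
  funext u
  cases u <;> rfl

theorem policy_setLevel_fst (x : AChoice) : (c.setLevel i (x, (c.level i).2)).policy =
    Function.update c.policy (BV.a i) (aTarget n i x) := by
  funext u
  obtain _ | _ | _ | j | j := u <;> try rfl
  all_goals
    obtain rfl | h := eq_or_ne j i
    · simp [policy, setLevel_level_self]
    · simp [policy, setLevel_level_of_ne h, h]

theorem policy_setLevel_snd (y : BChoice) : (c.setLevel i ((c.level i).1, y)).policy =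
    Function.update c.policy (BV.b i) (bTarget n i y) := by
  funext u
  obtain _ | _ | _ | j | j := u <;> try rfl
  all_goals
    obtain rfl | h := eq_or_ne j i
    · simp [policy, setLevel_level_self]
    · simp [policy, setLevel_level_of_ne h, h]

/-- The value of `a i`, where `a (n + 1)` is the sink. -/
noncomputable def valA (c : Config n) (i : ℕ) : ℚ :=
  BVal n c.policy (aN n i)

/-- The value of `b i`, where `b (n + 1)` is the dummy vertex. -/
noncomputable def valB (c : Config n) (i : ℕ) : ℚ :=
  BVal n c.policy (bN n i)

/-- The value of the transportation vertex. -/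
noncomputable def valT (c : Config n) : ℚ :=
  BVal n c.policy BV.t

/-- The value obtained by taking the edge of kind `x` at `a i` and following the policy
afterwards. -/
noncomputable def qA (c : Config n) (i : ℕ) : AChoice → ℚ
  | .enter => 2 ^ i + c.valB i
  | .skip => c.valA (i + 1)
  | .board => c.valT - 2 ^ i + 5 / 4

/-- The value obtained by taking the edge of kind `y` at `b i` and following the policy
afterwards. -/
noncomputable def qB (c : Config n) (i : ℕ) : BChoice → ℚ
  | .stay => 3 / 4 + c.valB (i + 1)
  | .leave => c.valA (i + 1)

theorem rB_add_aTarget (hi : i ≤ n) (x : AChoice) :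
    rB n (BV.a i) (aTarget n i x) + BVal n c.policy (aTarget n i x) = c.qA i x := by
  cases x
  · rw [rB_enter, qA, valB, bN_of_le hi]; rfl
  · rw [rB_skip, zero_add]; rfl
  · rw [rB_board, qA, valT, aTarget]; ring

theorem rB_add_bTarget (y : BChoice) :
    rB n (BV.b i) (bTarget n i y) + BVal n c.policy (bTarget n i y) = c.qB i y := by
  cases y
  · rw [rB_stay]; rfl
  · rw [rB_leave, zero_add]; rfl

theorem bImproving_travel_iff :
    BImproving n c.policy BV.t (BV.a i) ↔ (1 ≤ i ∧ i ≤ n) ∧ c.valT < c.valA i := by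
  rw [BImproving, zB, sub_pos]
  refine ⟨fun ⟨h, hlt⟩ => ?_, fun ⟨h, hlt⟩ => ⟨bEdge_travel h, ?_⟩⟩
  · have hi : 1 ≤ i ∧ i ≤ n := h.isBVertex_right
    exact ⟨hi, by simpa [rB, valT, valA, aN_of_le hi.2] using hlt⟩
  · simpa [rB, valT, valA, aN_of_le h.2] using hlt

theorem bImproving_aTarget_iff (h : 1 ≤ i ∧ i ≤ n) {x : AChoice} :
    BImproving n c.policy (BV.a i) (aTarget n i x) ↔ c.valA i < c.qA i x := by
  rw [BImproving, zB, sub_pos, rB_add_aTarget h.2, valA, aN_of_le h.2]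
  exact and_iff_right (bEdge_aTarget h x)

theorem bImproving_bTarget_iff (h : 1 ≤ i ∧ i ≤ n) {y : BChoice} :
    BImproving n c.policy (BV.b i) (bTarget n i y) ↔ c.valB i < c.qB i y := by
  rw [BImproving, zB, sub_pos, rB_add_bTarget, valB, bN_of_le h.2]
  exact and_iff_right (bEdge_bTarget h y)

/-- A configuration that describes a weak unichain policy for `𝔅_n`. The virtual level `n + 1`
carries the fixed choices `(skip, leave)`. -/
structure IsProper (c : Config n) : Prop where
  one_le_travel : 1 ≤ c.travel
  travel_le : c.travel ≤ n
  level_last : c.level (n + 1) = (.skip, .leave)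
  weakUnichain : BWeakUnichain n c.policy

theorem IsProper.isBPolicy (hc : c.IsProper) : IsBPolicy n c.policy := by
  rintro (_ | _ | _ | i | i) hi
  exacts [bEdge_travel ⟨hc.one_le_travel, hc.travel_le⟩, by simp [BEdge, policy],
    by simp [BEdge, policy], bEdge_aTarget hi _, bEdge_bTarget hi _]

theorem IsProper.valT_eq (hc : c.IsProper) : c.valT = c.valA c.travel := by
  rw [valT, BVal_eq_rB_add (by simp) (hc.weakUnichain BV.t trivial), valA, aN_of_le hc.travel_le]
  exact zero_add _

theorem IsProper.valA_eq_qA (hc : c.IsProper) (h : 1 ≤ i ∧ i ≤ n) :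
    c.valA i = c.qA i (c.level i).1 := by
  rw [← rB_add_aTarget h.2, valA, aN_of_le h.2]
  exact BVal_eq_rB_add (by simp) (hc.weakUnichain _ h)

theorem IsProper.valB_eq_qB (hc : c.IsProper) (h : 1 ≤ i ∧ i ≤ n) :
    c.valB i = c.qB i (c.level i).2 := by
  rw [← rB_add_bTarget, valB, bN_of_le h.2]
  exact BVal_eq_rB_add (by simp) (hc.weakUnichain _ h)

theorem valA_last : c.valA (n + 1) = 0 := by
  rw [valA, aN_last, BVal_sink]

theorem IsProper.val_dummy (hc : c.IsProper) : BVal n c.policy BV.d = 0 := by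
  rw [BVal_eq_rB_add (by simp) (hc.weakUnichain BV.d trivial), policy, BVal_sink]
  exact add_zero _

theorem IsProper.valB_last (hc : c.IsProper) : c.valB (n + 1) = 0 := by
  rw [valB, bN_last, hc.val_dummy]

theorem IsProper.cases_of_bImproving (hc : c.IsProper) {u v : BV} (h : BImproving n c.policy u v) :
    (∃ i, (1 ≤ i ∧ i ≤ n) ∧ u = BV.t ∧ v = BV.a i) ∨
    (∃ i x, (1 ≤ i ∧ i ≤ n) ∧ u = BV.a i ∧ v = aTarget n i x) ∨
    (∃ i y, (1 ≤ i ∧ i ≤ n) ∧ u = BV.b i ∧ v = bTarget n i y) := by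
  obtain h' | h' | h' | ⟨rfl, rfl⟩ | ⟨rfl, rfl⟩ := bEdge_iff.1 h.1
  · exact .inl h'
  · exact .inr <| .inl h'
  · exact .inr <| .inr h'
  · exact absurd h.2 (by simp [zB, rB, hc.val_dummy, BVal_sink])
  · exact absurd h.2 (by simp [zB, rB])

theorem IsProper.le_of_fst_ne_skip (hc : c.IsProper) (hi : i ≤ n + 1)
    (h : (c.level i).1 ≠ .skip) : i ≤ n := by
  by_contra hin
  obtain rfl : i = n + 1 := by omega
  exact h (by rw [hc.level_last])

theorem IsProper.le_of_snd_ne_leave (hc : c.IsProper) (hi : i ≤ n + 1)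
    (h : (c.level i).2 ≠ .leave) : i ≤ n := by
  by_contra hin
  obtain rfl : i = n + 1 := by omega
  exact h (by rw [hc.level_last])

theorem IsProper.valA_of_enter (hc : c.IsProper) (h1 : 1 ≤ i) (hi : i ≤ n + 1)
    (h : (c.level i).1 = .enter) : c.valA i = 2 ^ i + c.valB i := by
  rw [hc.valA_eq_qA ⟨h1, hc.le_of_fst_ne_skip hi (by simp [h])⟩, h, qA]

theorem IsProper.valA_of_board (hc : c.IsProper) (h1 : 1 ≤ i) (hi : i ≤ n + 1)
    (h : (c.level i).1 = .board) : c.valA i = c.valT - 2 ^ i + 5 / 4 := by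
  rw [hc.valA_eq_qA ⟨h1, hc.le_of_fst_ne_skip hi (by simp [h])⟩, h, qA]

theorem IsProper.valA_of_skip (hc : c.IsProper) (h1 : 1 ≤ i) (hi : i ≤ n)
    (h : (c.level i).1 = .skip) : c.valA i = c.valA (i + 1) := by
  rw [hc.valA_eq_qA ⟨h1, hi⟩, h, qA]

theorem IsProper.valB_of_stay (hc : c.IsProper) (h1 : 1 ≤ i) (hi : i ≤ n + 1)
    (h : (c.level i).2 = .stay) : c.valB i = 3 / 4 + c.valB (i + 1) := by
  rw [hc.valB_eq_qB ⟨h1, hc.le_of_snd_ne_leave hi (by simp [h])⟩, h, qB]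

theorem IsProper.valB_of_leave (hc : c.IsProper) (h1 : 1 ≤ i) (hi : i ≤ n)
    (h : (c.level i).2 = .leave) : c.valB i = c.valA (i + 1) := by
  rw [hc.valB_eq_qB ⟨h1, hi⟩, h, qB]

theorem IsProper.valA_eq_valB (hc : c.IsProper) (h1 : 1 ≤ i) (hi : i ≤ n + 1)
    (h : c.level i = (.skip, .leave)) : c.valA i = c.valB i := by
  obtain rfl | hi := Nat.eq_or_lt_of_le hi
  · rw [valA_last, hc.valB_last]
  · rw [hc.valA_of_skip h1 (by omega) (by rw [h]), hc.valB_of_leave h1 (by omega) (by rw [h])]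

/-! ### Forced Bland steps -/

/-- No edge leaving `a i` or `b i` is an improving switch. -/
def LevelOptimal (c : Config n) (i : ℕ) : Prop :=
  (∀ x, c.qA i x ≤ c.valA i) ∧ ∀ y, c.qB i y ≤ c.valB i

/-- No edge preceding level `i` in the Bland numbering is an improving switch. -/
structure OptimalBelow (c : Config n) (i : ℕ) : Prop where
  valA_le : ∀ j, 1 ≤ j → j ≤ n → c.valA j ≤ c.valT
  levelOptimal : ∀ j, 1 ≤ j → j < i → c.LevelOptimal j

/-- The proper configuration `c` describes the policy `π`. -/
def Represents (c : Config n) (π : BV → BV) : Prop :=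
  c.IsProper ∧ c.policy = π

theorem levelOptimal_of_le (henter : 2 ^ i + c.valB i ≤ c.valA i)
    (hskip : c.valA (i + 1) ≤ c.valA i) (hboard : c.valT - 2 ^ i + 5 / 4 ≤ c.valA i)
    (hstay : 3 / 4 + c.valB (i + 1) ≤ c.valB i) (hleave : c.valA (i + 1) ≤ c.valB i) :
    c.LevelOptimal i :=
  ⟨by rintro (_ | _ | _) <;> assumption, by rintro (_ | _) <;> assumption⟩

theorem optimalBelow_one (h : ∀ j, 1 ≤ j → j ≤ n → c.valA j ≤ c.valT) : c.OptimalBelow 1 :=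
  ⟨h, by omega⟩

theorem OptimalBelow.succ (h : c.OptimalBelow i) (hi : c.LevelOptimal i) :
    c.OptimalBelow (i + 1) where
  valA_le := h.valA_le
  levelOptimal j h1 hj := by
    obtain rfl | hj := Nat.eq_or_lt_of_le (Nat.lt_succ_iff.1 hj)
    exacts [hi, h.levelOptimal j h1 hj]

theorem IsProper.cases_of_optimalBelow (hc : c.IsProper) (hopt : c.OptimalBelow i) {u v : BV}
    (h : BImproving n c.policy u v) :
    (∃ j x, (1 ≤ j ∧ j ≤ n) ∧ i ≤ j ∧ u = BV.a j ∧ v = aTarget n j x) ∨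
    (∃ j y, (1 ≤ j ∧ j ≤ n) ∧ i ≤ j ∧ u = BV.b j ∧ v = bTarget n j y) := by
  obtain ⟨j, hj, rfl, rfl⟩ | ⟨j, x, hj, rfl, rfl⟩ | ⟨j, y, hj, rfl, rfl⟩ := hc.cases_of_bImproving h
  · exact absurd (bImproving_travel_iff.1 h).2 (hopt.valA_le j hj.1 hj.2).not_gt
  · refine .inl ⟨j, x, hj, ?_, rfl, rfl⟩
    by_contra! hji
    exact ((hopt.levelOptimal j hj.1 hji).1 x).not_gt ((bImproving_aTarget_iff hj).1 h)
  · refine .inr ⟨j, y, hj, ?_, rfl, rfl⟩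
    by_contra! hji
    exact ((hopt.levelOptimal j hj.1 hji).2 y).not_gt ((bImproving_bTarget_iff hj).1 h)

theorem IsProper.not_isBlandStep (hc : c.IsProper) (hopt : c.OptimalBelow (n + 1)) :
    ¬ IsBlandStep n (NB n) c.policy π' := by
  rintro ⟨u, v, huv, -⟩
  obtain ⟨j, x, hj, hij, -⟩ | ⟨j, y, hj, hij, -⟩ := hc.cases_of_optimalBelow hopt huv <;> omega

theorem IsProper.represents_setTravel (hc : c.IsProper) (hs : IsBlandStep n (NB n) c.policy π')
    (h1 : 1 ≤ i) (hi : i ≤ n) (hlt : ∀ j, 1 ≤ j → j < i → c.valA j ≤ c.valT)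
    (himp : c.valT < c.valA i) : (c.setTravel i).Represents π' := by
  obtain ⟨u, v, huv, hmin, rfl⟩ := hs
  have hN := hmin _ _ (bImproving_travel_iff.2 ⟨⟨h1, hi⟩, himp⟩)
  have hunichain := hc.weakUnichain.update hc.isBPolicy huv
  obtain ⟨j, hj, rfl, rfl⟩ | ⟨j, x, -, rfl, rfl⟩ | ⟨j, y, -, rfl, rfl⟩ :=
    hc.cases_of_bImproving huv
  · obtain rfl : j = i := by
      refine (show j ≤ i from hN).eq_of_not_lt fun hji => ?_
      exact (hlt j hj.1 hji).not_gt (bImproving_travel_iff.1 huv).2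
    exact ⟨⟨h1, hi, hc.level_last, policy_setTravel ▸ hunichain⟩, policy_setTravel⟩
  · rw [NB_aTarget, NB] at hN
    omega
  · rw [NB_bTarget, NB] at hN
    omega

theorem IsProper.represents_setLevel_fst (hc : c.IsProper)
    (hs : IsBlandStep n (NB n) c.policy π') (h : 1 ≤ i ∧ i ≤ n) (hopt : c.OptimalBelow i)
    (x : AChoice) (hlt : ∀ x', x'.rank < x.rank → c.qA i x' ≤ c.valA i)
    (himp : c.valA i < c.qA i x) : (c.setLevel i (x, (c.level i).2)).Represents π' := by
  obtain ⟨u, v, huv, hmin, rfl⟩ := hs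
  have hN := hmin _ _ ((bImproving_aTarget_iff h).2 himp)
  have hunichain := hc.weakUnichain.update hc.isBPolicy huv
  have hx := x.rank_le
  rw [NB_aTarget] at hN
  obtain ⟨j, x', hj, hij, rfl, rfl⟩ | ⟨j, y, hj, hij, rfl, rfl⟩ :=
    hc.cases_of_optimalBelow hopt huv
  · rw [NB_aTarget] at hN
    obtain rfl : i = j := by omega
    obtain rfl : x = x' := by
      refine AChoice.rank_injective (le_antisymm ?_ (by omega))
      by_contra! hx'
      exact (hlt x' hx').not_gt ((bImproving_aTarget_iff h).1 huv)
    refine ⟨⟨hc.one_le_travel, hc.travel_le, ?_, policy_setLevel_fst x ▸ hunichain⟩,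
      policy_setLevel_fst x⟩
    rw [setLevel_level_of_ne (by omega), hc.level_last]
  · rw [NB_bTarget] at hN
    omega

theorem IsProper.represents_setLevel_snd (hc : c.IsProper)
    (hs : IsBlandStep n (NB n) c.policy π') (h : 1 ≤ i ∧ i ≤ n) (hopt : c.OptimalBelow i)
    (hA : ∀ x, c.qA i x ≤ c.valA i) (y : BChoice)
    (hlt : ∀ y', y'.rank < y.rank → c.qB i y' ≤ c.valB i)
    (himp : c.valB i < c.qB i y) : (c.setLevel i ((c.level i).1, y)).Represents π' := by
  obtain ⟨u, v, huv, hmin, rfl⟩ := hs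
  have hN := hmin _ _ ((bImproving_bTarget_iff h).2 himp)
  have hunichain := hc.weakUnichain.update hc.isBPolicy huv
  have hy := y.rank_le
  rw [NB_bTarget] at hN
  obtain ⟨j, x, hj, hij, rfl, rfl⟩ | ⟨j, y', hj, hij, rfl, rfl⟩ :=
    hc.cases_of_optimalBelow hopt huv
  · rw [NB_aTarget] at hN
    obtain rfl : i = j := by omega
    exact absurd ((bImproving_aTarget_iff h).1 huv) (hA x).not_gt
  · rw [NB_bTarget] at hN
    obtain rfl : i = j := by omega
    obtain rfl : y = y' := by
      refine BChoice.rank_injective (le_antisymm ?_ (by omega))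
      by_contra! hy'
      exact (hlt y' hy').not_gt ((bImproving_bTarget_iff h).1 huv)
    refine ⟨⟨hc.one_le_travel, hc.travel_le, ?_, policy_setLevel_snd y ▸ hunichain⟩,
      policy_setLevel_snd y⟩
    rw [setLevel_level_of_ne (by omega), hc.level_last]

theorem IsProper.represents_enter (hc : c.IsProper) (hs : IsBlandStep n (NB n) c.policy π')
    (h1 : 1 ≤ i) (hi : i ≤ n) (hopt : c.OptimalBelow i) (himp : c.valA i < 2 ^ i + c.valB i) :
    (c.setLevel i (.enter, (c.level i).2)).Represents π' :=
  hc.represents_setLevel_fst hs ⟨h1, hi⟩ hopt .enter (fun _ h => absurd h (Nat.not_lt_zero _)) himp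

theorem IsProper.represents_skip (hc : c.IsProper) (hs : IsBlandStep n (NB n) c.policy π')
    (h1 : 1 ≤ i) (hi : i ≤ n) (hopt : c.OptimalBelow i) (henter : 2 ^ i + c.valB i ≤ c.valA i)
    (himp : c.valA i < c.valA (i + 1)) : (c.setLevel i (.skip, (c.level i).2)).Represents π' := by
  refine hc.represents_setLevel_fst hs ⟨h1, hi⟩ hopt .skip ?_ himp
  rintro (_ | _ | _) h
  exacts [henter, absurd h (by decide), absurd h (by decide)]

theorem IsProper.represents_board (hc : c.IsProper) (hs : IsBlandStep n (NB n) c.policy π')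
    (h1 : 1 ≤ i) (hi : i ≤ n) (hopt : c.OptimalBelow i) (henter : 2 ^ i + c.valB i ≤ c.valA i)
    (hskip : c.valA (i + 1) ≤ c.valA i) (himp : c.valA i < c.valT - 2 ^ i + 5 / 4) :
    (c.setLevel i (.board, (c.level i).2)).Represents π' := by
  refine hc.represents_setLevel_fst hs ⟨h1, hi⟩ hopt .board ?_ himp
  rintro (_ | _ | _) h
  exacts [henter, hskip, absurd h (by decide)]

theorem IsProper.represents_stay (hc : c.IsProper) (hs : IsBlandStep n (NB n) c.policy π')
    (h1 : 1 ≤ i) (hi : i ≤ n) (hopt : c.OptimalBelow i) (henter : 2 ^ i + c.valB i ≤ c.valA i)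
    (hskip : c.valA (i + 1) ≤ c.valA i) (hboard : c.valT - 2 ^ i + 5 / 4 ≤ c.valA i)
    (himp : c.valB i < 3 / 4 + c.valB (i + 1)) :
    (c.setLevel i ((c.level i).1, .stay)).Represents π' :=
  hc.represents_setLevel_snd hs ⟨h1, hi⟩ hopt (by rintro (_ | _ | _) <;> assumption) .stay
    (fun _ h => absurd h (Nat.not_lt_zero _)) himp

theorem IsProper.represents_leave (hc : c.IsProper) (hs : IsBlandStep n (NB n) c.policy π')
    (h1 : 1 ≤ i) (hi : i ≤ n) (hopt : c.OptimalBelow i) (henter : 2 ^ i + c.valB i ≤ c.valA i)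
    (hskip : c.valA (i + 1) ≤ c.valA i) (hboard : c.valT - 2 ^ i + 5 / 4 ≤ c.valA i)
    (hstay : 3 / 4 + c.valB (i + 1) ≤ c.valB i) (himp : c.valB i < c.valA (i + 1)) :
    (c.setLevel i ((c.level i).1, .leave)).Represents π' := by
  refine hc.represents_setLevel_snd hs ⟨h1, hi⟩ hopt (by rintro (_ | _ | _) <;> assumption)
    .leave ?_ himp
  rintro (_ | _) h
  exacts [hstay, absurd h (by decide)]

/-! ### Regular tails -/

/-- The pairs of consecutive levels that occur in the tails of the configurations visited by
Bland's rule. -/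
def Compatible : AChoice × BChoice → AChoice × BChoice → Prop
  | (.enter, .leave), l => l.1 ≠ .board
  | (.enter, .stay), l => l.1 = .board ∨ l = (.skip, .leave)
  | (.skip, .leave), l => l.1 = .enter ∨ l = (.skip, .leave)
  | (.skip, .stay), l => l.1 = .enter
  | (.board, .leave), l => l = (.skip, .stay)
  | (.board, .stay), l => l.1 = .board

/-- All consecutive levels from `q` on are compatible. Then the paths from `b j`, and from `a j`
unless `board j` is active, avoid the transportation vertex for all `j ≥ q`. -/
def Regular (c : Config n) (q : ℕ) : Prop :=
  ∀ j, q ≤ j → j ≤ n → Compatible (c.level j) (c.level (j + 1))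

section Compatible

variable {l l' : AChoice × BChoice}

theorem Compatible.fst_ne_board_of_leave (h : Compatible l l') (hl : l.2 = .leave) :
    l'.1 ≠ .board := by
  obtain ⟨_ | _ | _, y⟩ := l <;> obtain rfl : y = .leave := hl
  · exact h
  · obtain h | rfl := h <;> simp [*]
  · obtain rfl : l' = (.skip, .stay) := h
    simp

theorem Compatible.fst_ne_board_of_skip (h : Compatible l l') (hl : l.1 = .skip) :
    l'.1 ≠ .board := by
  obtain ⟨x, _ | _⟩ := l <;> obtain rfl : x = .skip := hl
  · simp [show l'.1 = .enter from h]
  · exact h.fst_ne_board_of_leave rfl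

theorem Compatible.enter (h : Compatible l l') (hl : l ≠ (.skip, .stay)) :
    Compatible (.enter, l.2) l' := by
  obtain ⟨x, _ | _⟩ := l
  · cases x
    exacts [h, absurd rfl hl, .inl h]
  · exact h.fst_ne_board_of_leave rfl

end Compatible

section Regular

variable {q : ℕ} {l : AChoice × BChoice}

theorem Regular.mono {q' : ℕ} (hr : c.Regular q) (h : q ≤ q') : c.Regular q' :=
  fun j hj => hr j (h.trans hj)

theorem Regular.cons (hr : c.Regular (q + 1)) (h : Compatible (c.level q) (c.level (q + 1))) :
    c.Regular q := by
  intro j hj hjn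
  obtain rfl | hj := hj.eq_or_lt
  exacts [h, hr j hj hjn]

theorem Regular.setLevel (hr : c.Regular q)
    (hprev : ∀ j, q ≤ j → j + 1 = i → Compatible (c.level j) l)
    (hnext : q ≤ i → Compatible l (c.level (i + 1))) : (c.setLevel i l).Regular q := by
  intro j hj hjn
  obtain rfl | hji := eq_or_ne j i
  · rw [setLevel_level_self, setLevel_level_of_ne (by omega)]
    exact hnext hj
  · rw [setLevel_level_of_ne hji]
    obtain hji' | hji' := eq_or_ne (j + 1) i
    · rw [hji', setLevel_level_self]
      exact hprev j hj hji'
    · rw [setLevel_level_of_ne hji']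
      exact hr j hj hjn

theorem IsProper.valB_congr (hc : c.IsProper) (hc' : c'.IsProper) (h1 : 1 ≤ i) (hi : i ≤ n)
    (hcomp : Compatible (c.level i) (c.level (i + 1))) (hsnd : (c'.level i).2 = (c.level i).2)
    (hB : c'.valB (i + 1) = c.valB (i + 1))
    (hA : (c.level (i + 1)).1 ≠ .board → c'.valA (i + 1) = c.valA (i + 1)) :
    c'.valB i = c.valB i := by
  rw [hc.valB_eq_qB ⟨h1, hi⟩, hc'.valB_eq_qB ⟨h1, hi⟩, hsnd]
  cases hy : (c.level i).2
  · exact congrArg (3 / 4 + ·) hB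
  · exact hA (hcomp.fst_ne_board_of_leave hy)

theorem Regular.val_congr (hr : c.Regular q) (hc : c.IsProper) (hc' : c'.IsProper) (hq : 1 ≤ q)
    (h : ∀ j, q ≤ j → j ≤ n → c'.level j = c.level j) (hqj : q ≤ j) (hj : j ≤ n + 1) :
    c'.valB j = c.valB j ∧ ((c.level j).1 ≠ .board → c'.valA j = c.valA j) := by
  induction hj using Nat.decreasingInduction with
  | self => exact ⟨by rw [hc.valB_last, hc'.valB_last], fun _ => by rw [valA_last, valA_last]⟩
  | of_succ j hj ih =>
    obtain ⟨ihB, ihA⟩ := ih (by omega)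
    have hjn : 1 ≤ j ∧ j ≤ n := by omega
    have hcomp := hr j hqj hjn.2
    have hlevel := h j hqj hjn.2
    have hB := hc.valB_congr hc' hjn.1 hjn.2 hcomp (by rw [hlevel]) ihB ihA
    refine ⟨hB, fun hx => ?_⟩
    rw [hc.valA_eq_qA hjn, hc'.valA_eq_qA hjn, hlevel]
    cases hl : (c.level j).1
    exacts [congrArg (2 ^ j + ·) hB, ihA (hcomp.fst_ne_board_of_skip hl), absurd hl hx]

theorem Regular.valB_congr (hr : c.Regular q) (hc : c.IsProper) (hc' : c'.IsProper) (hq : 1 ≤ q)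
    (hqn : q ≤ n) (h : ∀ j, q < j → j ≤ n → c'.level j = c.level j)
    (hsnd : (c'.level q).2 = (c.level q).2) : c'.valB q = c.valB q := by
  obtain ⟨hB, hA⟩ := (hr.mono q.le_succ).val_congr hc hc' (by omega) h le_rfl (by omega)
  exact hc.valB_congr hc' hq hqn (hr q le_rfl hqn) hsnd hB hA

theorem Regular.valT_congr (hr : c.Regular q) (hc : c.IsProper) (hc' : c'.IsProper) (hq : 1 ≤ q)
    (h : ∀ j, q ≤ j → j ≤ n → c'.level j = c.level j) (htravel : c'.travel = c.travel)
    (hle : q ≤ c.travel) (hboard : (c.level c.travel).1 ≠ .board) : c'.valT = c.valT := by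
  rw [hc.valT_eq, hc'.valT_eq, htravel]
  exact (hr.val_congr hc hc' hq h hle (by have := hc.travel_le; omega)).2 hboard

theorem IsProper.val_succ_le_valT (hc : c.IsProper) (h1 : 1 ≤ i) (hi : i ≤ n)
    (hcomp : Compatible (c.level i) (c.level (i + 1))) (hA : c.valA i ≤ c.valT)
    (hB : (c.level i).1 = .board → c.valB i ≤ c.valT) :
    c.valA (i + 1) ≤ c.valT ∧ ((c.level (i + 1)).1 = .board → c.valB (i + 1) ≤ c.valT) := by
  have hpow := two_le_two_pow h1
  have hpow' := two_le_two_pow (i := i + 1) (by omega)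
  have hBi : c.level i ≠ (.skip, .stay) → c.valB i ≤ c.valT := by
    intro hne
    rcases hl : c.level i with ⟨_ | _ | _, y⟩
    · linarith [hc.valA_of_enter h1 (by omega) (by rw [hl])]
    · obtain rfl : y = .leave := by
        cases y
        exacts [absurd hl hne, rfl]
      exact (hc.valA_eq_valB h1 (by omega) hl).symm.trans_le hA
    · exact hB (by rw [hl])
  cases hy : (c.level i).2
  · have hstay := hc.valB_of_stay h1 (by omega) hy
    by_cases hskip : c.level i = (.skip, .stay)
    · have henter : (c.level (i + 1)).1 = .enter := by rwa [hskip] at hcomp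
      refine ⟨?_, by simp [henter]⟩
      rwa [← hc.valA_of_skip h1 hi (by rw [hskip])]
    · have hBsucc : c.valB (i + 1) ≤ c.valT := by linarith [hBi hskip]
      refine ⟨?_, fun _ => hBsucc⟩
      have hnext := hcomp.enter hskip
      rw [hy] at hnext
      obtain hboard | hl := hnext
      · linarith [hc.valA_of_board (by omega) (by omega) hboard]
      · rwa [hc.valA_eq_valB (by omega) (by omega) hl]
  · have hne : c.level i ≠ (.skip, .stay) := fun h => by simp [h] at hy
    rw [← hc.valB_of_leave h1 hi hy]
    exact ⟨hBi hne, fun h => absurd h (hcomp.fst_ne_board_of_leave hy)⟩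

theorem Regular.valA_le_valT (hr : c.Regular q) (hc : c.IsProper) (hq : 1 ≤ q)
    (hboard : (c.level q).1 ≠ .board) (hA : c.valA q ≤ c.valT) (hqj : q ≤ j) (hj : j ≤ n + 1) :
    c.valA j ≤ c.valT := by
  have hAB : c.valA j ≤ c.valT ∧ ((c.level j).1 = .board → c.valB j ≤ c.valT) := by
    induction j, hqj using Nat.le_induction with
    | base => exact ⟨hA, fun h => absurd h hboard⟩
    | succ j hqj ih =>
      obtain ⟨ihA, ihB⟩ := ih (by omega)
      exact hc.val_succ_le_valT (by omega) (by omega) (hr j hqj (by omega)) ihA ihB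
  exact hAB.1

theorem IsProper.valA_eq_of_forall_enter_leave (hc : c.IsProper) (h1 : 1 ≤ i) (hiq : i ≤ q)
    (hq : q ≤ n + 1) (h : ∀ j, i ≤ j → j < q → c.level j = (.enter, .leave)) :
    c.valA i = c.valA q + 2 ^ q - 2 ^ i := by
  induction q, hiq using Nat.le_induction with
  | base => ring
  | succ q hiq ih =>
    have hl := h q hiq (by omega)
    rw [ih (by omega) fun j hj hjq => h j hj (by omega),
      hc.valA_of_enter (by omega) (by omega) (by rw [hl]),
      hc.valB_of_leave (by omega) (by omega) (by rw [hl])]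
    ring

end Regular

/-! ### The phases of the counter -/

/-- Counting phase: all levels form a regular tail, `travel 1` is active, and `Val t ≤ K`. -/
structure Counting (c : Config n) (K : ℚ) : Prop where
  travel_eq : c.travel = 1
  fst_one_ne_board : (c.level 1).1 ≠ .board
  regular : c.Regular 1
  valT_le : c.valT ≤ K

/-- The shape of the levels `1, …, m + 1` while a carry into level `m + 1` is prepared and the
levels `1, …, k` have already been boarded. -/
structure Carry (c : Config n) (k m : ℕ) : Prop where
  lt : k < m
  succ_le : m + 1 ≤ n
  boarded : ∀ j, 1 ≤ j → j ≤ k → c.level j = (.board, .leave)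
  entered : ∀ j, k < j → j < m → c.level j = (.enter, .leave)
  level_eq : c.level m = (.enter, .stay)
  fst_succ : (c.level (m + 1)).1 = .enter
  regular : c.Regular (m + 1)

/-- Carrying phase: level `m + 1` has just been entered, and `travel (m + 1)` comes next. -/
structure Carrying (c : Config n) (m : ℕ) (K : ℚ) : Prop where
  travel_eq : c.travel = 1
  carry : c.Carry 0 m
  valT_le : c.valT ≤ K

/-- Boarding phase: `travel (m + 1)` is active, and the levels below `m` are boarded upwards. -/
structure Boarding (c : Config n) (k m : ℕ) (K : ℚ) : Prop where
  travel_eq : c.travel = m + 1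
  carry : c.Carry k m
  valT_le : c.valT ≤ K

/-- Staying phase: `skip m` is active, and `stay k, …, stay 1` are applied downwards. -/
structure Staying (c : Config n) (k m : ℕ) (K : ℚ) : Prop where
  travel_eq : c.travel = m + 1
  lt : k + 1 < m
  succ_le : m + 1 ≤ n
  boarded : ∀ j, 1 ≤ j → j < m → (c.level j).1 = .board
  leaving : ∀ j, 1 ≤ j → j ≤ k → (c.level j).2 = .leave
  fst_eq : (c.level m).1 = .skip
  fst_succ : (c.level (m + 1)).1 = .enter
  regular : c.Regular (k + 1)
  valT_le_valB : c.valT ≤ c.valB (k + 1)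
  valB_le : c.valB (k + 1) ≤ K

/-- Leaving phase: it takes the place of the staying phase after a carry into level `2`, where
`leave 1` is applied before level `1` is entered. -/
structure Leaving (c : Config n) (K : ℚ) : Prop where
  two_le : 2 ≤ n
  travel_eq : c.travel = 2
  fst_one : (c.level 1).1 = .skip
  fst_two : (c.level 2).1 = .enter
  regular : c.Regular 1
  valT_le : c.valT ≤ K

/-- Returning phase: level `1` has just been entered, and `travel 1` comes next. -/
structure Returning (c : Config n) (K : ℚ) : Prop where
  fst_one : (c.level 1).1 = .enter
  regular : c.Regular 1
  valT_lt : c.valT < c.valA 1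
  valA_le : c.valA 1 ≤ K

/-- The configuration is in one of the phases, with `K` as bound on the value of `t`. -/
inductive Invariant (c : Config n) (K : ℚ) : Prop
  | counting (h : c.Counting K)
  | carrying {m : ℕ} (h : c.Carrying m K)
  | boarding {k m : ℕ} (h : c.Boarding k m K)
  | staying {k m : ℕ} (h : c.Staying k m K)
  | leaving (h : c.Leaving K)
  | returning (h : c.Returning K)

/-- The policy `π` is described by a proper configuration satisfying the invariant. -/
def PolicyInvariant (n : ℕ) (K : ℚ) (π : BV → BV) : Prop :=
  ∃ c : Config n, c.Represents π ∧ c.Invariant K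

theorem setLevel_level_fst {y : BChoice} :
    ((c.setLevel i ((c.level i).1, y)).level j).1 = (c.level j).1 := by
  obtain rfl | h := eq_or_ne j i
  · rw [setLevel_level_self]
  · rw [setLevel_level_of_ne h]

section Prefix

variable {q : ℕ}

theorem IsProper.valT_eq_of_prefix (hc : c.IsProper) (ht : c.travel = 1) (h1 : 1 ≤ q)
    (hq : q ≤ n + 1) (h : ∀ j, 1 ≤ j → j < q → c.level j = (.enter, .leave)) :
    c.valT = c.valA q + 2 ^ q - 2 := by
  rw [hc.valT_eq, ht, hc.valA_eq_of_forall_enter_leave le_rfl h1 hq h, pow_one]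

theorem IsProper.valT_eq_of_prefix_stay (hc : c.IsProper) (ht : c.travel = 1) (h1 : 1 ≤ q)
    (hq : q ≤ n + 1) (h : ∀ j, 1 ≤ j → j < q → c.level j = (.enter, .leave))
    (hl : c.level q = (.enter, .stay)) : c.valT = c.valB (q + 1) + 2 ^ (q + 1) - 5 / 4 := by
  rw [hc.valT_eq_of_prefix ht h1 hq h, hc.valA_of_enter h1 hq (by rw [hl]),
    hc.valB_of_stay h1 hq (by rw [hl])]
  ring

theorem IsProper.board_le_of_prefix (hc : c.IsProper) (ht : c.travel = 1) (h1 : 1 ≤ q)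
    (hq : q ≤ n + 1) (h : ∀ j, 1 ≤ j → j < q → c.level j = (.enter, .leave)) :
    c.valT - 2 ^ q + 5 / 4 ≤ c.valA q := by
  linarith [hc.valT_eq_of_prefix ht h1 hq h]

theorem Counting.valA_le_valT {K : ℚ} (hcount : c.Counting K) (hc : c.IsProper) (h1 : 1 ≤ j)
    (hj : j ≤ n) : c.valA j ≤ c.valT :=
  hcount.regular.valA_le_valT hc le_rfl hcount.fst_one_ne_board
    (by rw [hc.valT_eq, hcount.travel_eq]) h1 (by omega)

theorem Counting.optimalBelow {K : ℚ} (hcount : c.Counting K) (hc : c.IsProper) (hq : q ≤ n + 1)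
    (h : ∀ j, 1 ≤ j → j < q → c.level j = (.enter, .leave))
    (hstay : 3 / 4 + c.valB q ≤ c.valA q) : c.OptimalBelow q where
  valA_le _ h1 hj := hcount.valA_le_valT hc h1 hj
  levelOptimal j h1 hj := by
    have hpow := two_le_two_pow h1
    have hA := hc.valA_of_enter h1 (by omega) (by rw [h j h1 hj])
    have hB := hc.valB_of_leave h1 (by omega) (by rw [h j h1 hj])
    have hboard := hc.board_le_of_prefix hcount.travel_eq h1 (by omega)
      fun i hi hij => h i hi (by omega)
    have hstay' : 3 / 4 + c.valB (j + 1) ≤ c.valA (j + 1) := by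
      obtain hjq | rfl := (Nat.succ_le_of_lt hj).lt_or_eq
      · have hpow' := two_le_two_pow (i := j + 1) (by omega)
        linarith [hc.valA_of_enter (i := j + 1) (by omega) (by omega) (by rw [h _ (by omega) hjq])]
      · exact hstay
    exact levelOptimal_of_le hA.ge (by linarith) hboard (by linarith) hB.ge

end Prefix

section Counting

variable {K : ℚ} {q k : ℕ}

theorem Counting.step_enter_one (h : c.Counting K) (hc : c.IsProper)
    (hs : IsBlandStep n (NB n) c.policy π') (hl : c.level 1 = (.skip, .leave)) :
    PolicyInvariant n (K + 2) π' := by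
  have hn : 1 ≤ n := hc.one_le_travel.trans hc.travel_le
  have hAB := hc.valA_eq_valB le_rfl (by omega) hl
  have hrep := hc.represents_enter hs le_rfl hn (optimalBelow_one fun _ => h.valA_le_valT hc)
    (by linarith)
  set c' := c.setLevel 1 (.enter, (c.level 1).2)
  have hl' : c'.level 1 = (.enter, (c.level 1).2) := setLevel_level_self
  refine ⟨c', hrep, .counting ⟨h.travel_eq, by simp [hl'], h.regular.setLevel (by omega)
    fun _ => (h.regular 1 le_rfl hn).enter (by simp [hl]), ?_⟩⟩
  have hB : c'.valB 1 = c.valB 1 := h.regular.valB_congr hc hrep.1 le_rfl hn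
    (fun j hj _ => setLevel_level_of_ne (by omega)) (by rw [hl'])
  have hA := hrep.1.valA_of_enter le_rfl (by omega) (by rw [hl'])
  have hT := hc.valT_eq
  have hT' : c'.valT = c'.valA 1 := by rw [hrep.1.valT_eq]; exact congrArg _ h.travel_eq
  rw [h.travel_eq] at hT
  linarith [h.valT_le]

theorem Counting.step_stay (h : c.Counting K) (hc : c.IsProper)
    (hs : IsBlandStep n (NB n) c.policy π') (h1 : 1 ≤ k) (hk : k ≤ n)
    (hprefix : ∀ j, 1 ≤ j → j ≤ k → c.level j = (.enter, .leave))
    (hl : c.level (k + 1) = (.skip, .leave)) : PolicyInvariant n (K + 2) π' := by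
  have hpow := two_le_two_pow h1
  have hlk := hprefix k h1 le_rfl
  have hAB := hc.valA_eq_valB (i := k + 1) (by omega) (by omega) hl
  have hA := hc.valA_of_enter h1 (by omega) (by rw [hlk])
  have hB := hc.valB_of_leave h1 (by omega) (by rw [hlk])
  have hprefix' : ∀ j, 1 ≤ j → j < k → c.level j = (.enter, .leave) :=
    fun j hj hjk => hprefix j hj hjk.le
  have hrep := hc.represents_stay hs h1 hk (h.optimalBelow hc (by omega) hprefix' (by linarith))
    (by linarith) (by linarith) (hc.board_le_of_prefix h.travel_eq h1 (by omega) hprefix')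
    (by linarith)
  set c' := c.setLevel k ((c.level k).1, .stay) with hc'
  have hlevel : ∀ j, j ≠ k → c'.level j = c.level j := fun j => setLevel_level_of_ne
  have hl' : c'.level k = (.enter, .stay) := by rw [hc', setLevel_level_self, hlk]
  refine ⟨c', hrep, .counting ⟨h.travel_eq, ?_, h.regular.setLevel ?_ fun _ => ?_, ?_⟩⟩
  · rw [hc', setLevel_level_fst]
    exact h.fst_one_ne_board
  · rintro j hj rfl
    rw [hprefix j hj (by omega), hlk]
    simp [Compatible]
  · rw [hlk, hl]
    exact .inr rfl
  · have hB' := ((h.regular.mono (by omega)).val_congr hc hrep.1 (by omega)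
      (fun j hj _ => hlevel j (by omega)) (le_refl (k + 1)) (by omega)).1
    have hT := hc.valT_eq_of_prefix h.travel_eq (q := k + 1) (by omega) (by omega)
      fun j hj hjk => hprefix j hj (by omega)
    have hT' := hrep.1.valT_eq_of_prefix_stay h.travel_eq h1 (by omega)
      (fun j hj hjk => (hlevel j hjk.ne).trans (hprefix' j hj hjk)) hl'
    linarith [h.valT_le]

theorem Counting.step_leave (h : c.Counting K) (hc : c.IsProper)
    (hs : IsBlandStep n (NB n) c.policy π') (h1 : 1 ≤ q) (hq : q ≤ n)
    (hprefix : ∀ j, 1 ≤ j → j < q → c.level j = (.enter, .leave))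
    (hl : c.level q = (.skip, .stay)) : PolicyInvariant n (K + 2) π' := by
  have hpow := two_le_two_pow h1
  have hpow' := pow_succ (2 : ℚ) q
  have hnext : (c.level (q + 1)).1 = .enter := by
    have hcomp := h.regular q h1 hq
    rwa [hl] at hcomp
  have hA := hc.valA_of_skip h1 hq (by rw [hl])
  have hA' := hc.valA_of_enter (by omega) (by omega) hnext
  have hB := hc.valB_of_stay h1 (by omega) (by rw [hl])
  have hrep := hc.represents_leave hs h1 hq
    (h.optimalBelow hc (by omega) hprefix (by linarith)) (by linarith) hA.ge
    (hc.board_le_of_prefix h.travel_eq h1 (by omega) hprefix) hB.ge (by linarith)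
  set c' := c.setLevel q ((c.level q).1, .leave) with hc'
  have hlevel : ∀ j, j ≠ q → c'.level j = c.level j := fun j => setLevel_level_of_ne
  refine ⟨c', hrep, .counting ⟨h.travel_eq, ?_, h.regular.setLevel ?_ fun _ => ?_, ?_⟩⟩
  · rw [hc', setLevel_level_fst]
    exact h.fst_one_ne_board
  · rintro j hj rfl
    rw [hprefix j hj (by omega), hl]
    simp [Compatible]
  · rw [hl]
    exact .inl hnext
  · have hAsucc := ((h.regular.mono (by omega)).val_congr hc hrep.1 (by omega)
      (fun j hj _ => hlevel j (by omega)) (le_refl (q + 1)) (by omega)).2 (by simp [hnext])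
    have hAq := hrep.1.valA_of_skip h1 hq (by rw [hc', setLevel_level_self, hl])
    have hT := hc.valT_eq_of_prefix h.travel_eq h1 (by omega) hprefix
    have hT' := hrep.1.valT_eq_of_prefix h.travel_eq h1 (by omega)
      fun j hj hjq => (hlevel j hjq.ne).trans (hprefix j hj hjq)
    linarith [h.valT_le]

theorem Counting.valA_succ_eq_valB_succ (h : c.Counting K) (hc : c.IsProper) (h1 : 1 ≤ q)
    (hq : q ≤ n) (hprefix : ∀ j, 1 ≤ j → j < q → c.level j = (.enter, .leave))
    (hl : c.level q = (.enter, .stay)) : c.valA (q + 1) = c.valB (q + 1) := by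
  have hnext := h.regular q h1 hq
  rw [hl] at hnext
  obtain hboard | hskip := hnext
  · linarith [hc.valA_of_board (by omega) (by omega) hboard,
      hc.valT_eq_of_prefix_stay h.travel_eq h1 (by omega) hprefix hl]
  · exact hc.valA_eq_valB (by omega) (by omega) hskip

theorem Counting.step_enter (h : c.Counting K) (hc : c.IsProper)
    (hs : IsBlandStep n (NB n) c.policy π') (h1 : 1 ≤ q) (hq : q ≤ n)
    (hprefix : ∀ j, 1 ≤ j → j < q → c.level j = (.enter, .leave))
    (hl : c.level q = (.enter, .stay)) : PolicyInvariant n (K + 2) π' := by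
  have hpow := two_le_two_pow h1
  have hpow' := pow_succ (2 : ℚ) q
  have hne : c.level (q + 1) ≠ (.skip, .stay) := by
    intro hl'
    have hcomp := h.regular q h1 hq
    simp [hl, hl', Compatible] at hcomp
  have hT := hc.valT_eq_of_prefix_stay h.travel_eq h1 (by omega) hprefix hl
  have hA := hc.valA_of_enter h1 (by omega) (by rw [hl])
  have hB := hc.valB_of_stay h1 (by omega) (by rw [hl])
  have hAB := h.valA_succ_eq_valB_succ hc h1 hq hprefix hl
  have hopt : c.OptimalBelow (q + 1) :=
    (h.optimalBelow hc (by omega) hprefix (by linarith)).succ <| levelOptimal_of_le hA.ge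
      (by linarith) (hc.board_le_of_prefix h.travel_eq h1 (by omega) hprefix) hB.ge (by linarith)
  have hqn : q + 1 ≤ n := by
    refine Nat.succ_le_of_lt (hq.lt_of_ne ?_)
    rintro rfl
    exact hc.not_isBlandStep hopt hs
  have hrep := hc.represents_enter hs (by omega) hqn hopt (by linarith)
  set c' := c.setLevel (q + 1) (.enter, (c.level (q + 1)).2)
  have hlevel : ∀ j, j ≠ q + 1 → c'.level j = c.level j := fun j => setLevel_level_of_ne
  have hl' : c'.level (q + 1) = (.enter, (c.level (q + 1)).2) := setLevel_level_self
  have hprefix' : ∀ j, 1 ≤ j → j < q → c'.level j = (.enter, .leave) :=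
    fun j hj hjq => (hlevel j (by omega)).trans (hprefix j hj hjq)
  have hlq : c'.level q = (.enter, .stay) := (hlevel q (by omega)).trans hl
  have hreg : c.Regular (q + 1) := h.regular.mono (by omega)
  have hreg' : c'.Regular (q + 1) := hreg.setLevel (by omega) fun _ =>
    (hreg (q + 1) le_rfl hqn).enter hne
  have hB' := hreg.valB_congr hc hrep.1 (by omega) hqn (fun j hj _ => hlevel j (by omega))
    (by rw [hl'])
  refine ⟨c', hrep, .carrying (m := q) ⟨h.travel_eq, ⟨h1, hqn, by omega, hprefix', hlq,
    by rw [hl'], hreg'⟩, ?_⟩⟩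
  linarith [h.valT_le, hrep.1.valT_eq_of_prefix_stay h.travel_eq h1 (by omega) hprefix' hlq]

theorem Counting.step (h : c.Counting K) (hc : c.IsProper)
    (hs : IsBlandStep n (NB n) c.policy π') : PolicyInvariant n (K + 2) π' := by
  classical
  have hex : ∃ q, 1 ≤ q ∧ c.level q ≠ (.enter, .leave) :=
    ⟨n + 1, by omega, by simp [hc.level_last]⟩
  obtain ⟨q, hq, h1, hne, hprefix⟩ : ∃ q ≤ n + 1, 1 ≤ q ∧ c.level q ≠ (.enter, .leave) ∧
      ∀ j, 1 ≤ j → j < q → c.level j = (.enter, .leave) :=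
    ⟨Nat.find hex, Nat.find_min' hex ⟨by omega, by simp [hc.level_last]⟩, (Nat.find_spec hex).1,
      (Nat.find_spec hex).2, fun j hj hjq => by simpa [hj] using Nat.find_min hex hjq⟩
  obtain ⟨k, rfl⟩ : ∃ k, q = k + 1 := ⟨q - 1, by omega⟩
  rcases hl : c.level (k + 1) with ⟨_ | _ | _, _ | _⟩
  · exact h.step_enter hc hs h1 (hc.le_of_snd_ne_leave hq (by simp [hl])) hprefix hl
  · exact absurd hl hne
  · exact h.step_leave hc hs h1 (hc.le_of_snd_ne_leave hq (by simp [hl])) hprefix hl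
  · obtain rfl | hk := Nat.eq_zero_or_pos k
    · exact h.step_enter_one hc hs hl
    · exact h.step_stay hc hs hk (by omega) (fun j hj hjk => hprefix j hj (by omega)) hl
  all_goals
    exfalso
    obtain rfl | hk := Nat.eq_zero_or_pos k
    · exact h.fst_one_ne_board (by simp [hl])
    · have hcomp := h.regular k hk (by omega)
      rw [hprefix k hk (by omega), hl] at hcomp
      exact hcomp rfl

end Counting

section Carrying

variable {K : ℚ} {m : ℕ}

theorem Carrying.step (h : c.Carrying m K) (hc : c.IsProper)
    (hs : IsBlandStep n (NB n) c.policy π') : PolicyInvariant n (K + 2) π' := by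
  have hm := h.carry.lt
  have hmn := h.carry.succ_le
  have hT := hc.valT_eq_of_prefix_stay h.travel_eq hm (by omega) h.carry.entered h.carry.level_eq
  have hA := hc.valA_of_enter (by omega) (by omega) h.carry.fst_succ
  have hle : ∀ j, 1 ≤ j → j < m + 1 → c.valA j ≤ c.valT := by
    intro j h1 hj
    have hprefix := h.carry.entered
    linarith [two_le_two_pow h1, hc.valT_eq_of_prefix h.travel_eq hm (by omega) hprefix,
      hc.valA_eq_of_forall_enter_leave h1 (Nat.le_of_lt_succ hj) (by omega)
        fun i hi him => hprefix i (by omega) him]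
  have hrep := hc.represents_setTravel hs (by omega) hmn hle (by linarith)
  have hA' := (h.carry.regular.val_congr hc hrep.1 (by omega) (fun _ _ _ => rfl) le_rfl
    (by omega)).2 (by simp [h.carry.fst_succ])
  have hT' : (c.setTravel (m + 1)).valT = (c.setTravel (m + 1)).valA (m + 1) := hrep.1.valT_eq
  refine ⟨_, hrep, .boarding (k := 0) (m := m) ⟨rfl, ?_, by linarith [h.valT_le]⟩⟩
  exact ⟨hm, hmn, h.carry.boarded, h.carry.entered, h.carry.level_eq, h.carry.fst_succ,
    h.carry.regular⟩

end Carrying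

section Boarding

variable {K : ℚ} {k m : ℕ}

theorem Carry.fst_eq_enter (h : c.Carry k m) (hkj : k < j) (hj : j ≤ m) :
    (c.level j).1 = .enter := by
  obtain hj | rfl := hj.lt_or_eq
  · rw [h.entered j hkj hj]
  · rw [h.level_eq]

theorem Carry.board (h : c.Carry k m) (hk : k + 1 < m) :
    (c.setLevel (k + 1) (.board, (c.level (k + 1)).2)).Carry (k + 1) m where
  lt := hk
  succ_le := h.succ_le
  boarded j h1 hj := by
    obtain rfl | hne := eq_or_ne j (k + 1)
    · rw [setLevel_level_self, h.entered (k + 1) (by omega) hk]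
    · rw [setLevel_level_of_ne hne, h.boarded j h1 (by omega)]
  entered j hj hjm := by rw [setLevel_level_of_ne (by omega), h.entered j (by omega) hjm]
  level_eq := by rw [setLevel_level_of_ne (by omega), h.level_eq]
  fst_succ := by rw [setLevel_level_of_ne (by omega), h.fst_succ]
  regular := h.regular.setLevel (by omega) (by omega)

theorem Carry.regular_skip (h : c.Carry k m) :
    (c.setLevel m (.skip, (c.level m).2)).Regular m := by
  refine (h.regular.setLevel (by omega) (by omega)).cons ?_
  rw [setLevel_level_self, setLevel_level_of_ne (by omega), h.level_eq]
  exact h.fst_succ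

theorem Boarding.valT_eq (h : c.Boarding k m K) (hc : c.IsProper) : c.valT = c.valA (m + 1) := by
  rw [hc.valT_eq, h.travel_eq]

theorem Boarding.valA_of_lt (h : c.Boarding k m K) (hc : c.IsProper) (hkj : k < j) (hj : j ≤ m) :
    c.valA j = c.valT - 2 ^ j + 3 / 4 := by
  have hmn := h.carry.succ_le
  rw [h.valT_eq hc, hc.valA_of_enter (by omega) (by omega) h.carry.fst_succ,
    hc.valA_eq_of_forall_enter_leave (by omega) hj (by omega)
      fun i hi him => h.carry.entered i (by omega) him,
    hc.valA_of_enter (by omega) (by omega) (h.carry.fst_eq_enter h.carry.lt le_rfl),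
    hc.valB_of_stay (by omega) (by omega) (by rw [h.carry.level_eq])]
  ring

theorem Boarding.valA_of_le (h : c.Boarding k m K) (hc : c.IsProper) (h1 : 1 ≤ j) (hj : j ≤ k) :
    c.valA j = c.valT - 2 ^ j + 5 / 4 := by
  have hk := h.carry.lt
  have hmn := h.carry.succ_le
  exact hc.valA_of_board h1 (by omega) (by rw [h.carry.boarded j h1 hj])

theorem Boarding.valA_le (h : c.Boarding k m K) (hc : c.IsProper) (h1 : 1 ≤ j) (hj : j ≤ m) :
    c.valA j ≤ c.valT - 2 ^ j + 5 / 4 := by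
  obtain hjk | hkj := le_or_gt j k
  · exact (h.valA_of_le hc h1 hjk).le
  · linarith [h.valA_of_lt hc hkj hj]

theorem Boarding.valA_le_valT (h : c.Boarding k m K) (hc : c.IsProper) (h1 : 1 ≤ j)
    (hj : j ≤ n) : c.valA j ≤ c.valT := by
  obtain hjm | hmj := le_or_gt j m
  · linarith [h.valA_le hc h1 hjm, two_le_two_pow h1]
  · exact h.carry.regular.valA_le_valT hc (by omega) (by simp [h.carry.fst_succ])
      (h.valT_eq hc).ge hmj (by omega)

theorem Boarding.stay_le (h : c.Boarding k m K) (hc : c.IsProper) (h1 : 1 ≤ j) (hj : j ≤ k + 1) :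
    3 / 4 + c.valB j ≤ c.valA j := by
  have hpow := two_le_two_pow h1
  have hpow' := pow_succ (2 : ℚ) j
  have hk := h.carry.lt
  have hmn := h.carry.succ_le
  obtain hjk | rfl := hj.lt_or_eq
  · have hB := hc.valB_of_leave h1 (by omega) (by rw [h.carry.boarded j h1 (by omega)])
    linarith [h.valA_of_le hc h1 (by omega), h.valA_le hc (j := j + 1) (by omega) (by omega)]
  · linarith [hc.valA_of_enter h1 (by omega) (h.carry.fst_eq_enter (by omega) hk)]

theorem Boarding.optimalBelow (h : c.Boarding k m K) (hc : c.IsProper) :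
    c.OptimalBelow (k + 1) where
  valA_le _ h1 hj := h.valA_le_valT hc h1 hj
  levelOptimal j h1 hj := by
    have hpow := two_le_two_pow h1
    have hpow' := pow_succ (2 : ℚ) j
    have hk := h.carry.lt
    have hmn := h.carry.succ_le
    have hA := h.valA_of_le hc h1 (by omega)
    have hA' := h.valA_le hc (j := j + 1) (by omega) (by omega)
    have hB := hc.valB_of_leave h1 (by omega) (by rw [h.carry.boarded j h1 (by omega)])
    have hstay := h.stay_le hc (j := j + 1) (by omega) (by omega)
    exact levelOptimal_of_le (by linarith) (by linarith) hA.ge (by linarith) hB.ge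

theorem Boarding.valT_setLevel (h : c.Boarding k m K) (hc : c.IsProper) (hi : i ≤ m)
    {l : AChoice × BChoice} (hc' : (c.setLevel i l).IsProper) : (c.setLevel i l).valT = c.valT :=
  h.carry.regular.valT_congr hc hc' (by omega) (fun j hj _ => setLevel_level_of_ne (by omega)) rfl
    h.travel_eq.ge (by simp [h.travel_eq, h.carry.fst_succ])

theorem Boarding.step_board (h : c.Boarding k m K) (hc : c.IsProper)
    (hs : IsBlandStep n (NB n) c.policy π') (hk : k + 1 < m) : PolicyInvariant n (K + 2) π' := by
  have hmn := h.carry.succ_le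
  have hpow := two_le_two_pow (i := k + 1) (by omega)
  have hpow' := pow_succ (2 : ℚ) (k + 1)
  have hA := h.valA_of_lt hc (j := k + 1) (by omega) hk.le
  have hA' := h.valA_le hc (j := k + 1 + 1) (by omega) hk
  have henter := hc.valA_of_enter (i := k + 1) (by omega) (by omega)
    (h.carry.fst_eq_enter (by omega) hk.le)
  have hrep := hc.represents_board hs (by omega) (by omega) (h.optimalBelow hc) henter.ge
    (by linarith) (by linarith)
  have hT := h.valT_setLevel hc hk.le hrep.1
  exact ⟨_, hrep, .boarding ⟨h.travel_eq, h.carry.board hk, by linarith [h.valT_le]⟩⟩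

theorem Boarding.represents_skip (h : c.Boarding k (k + 1) K) (hc : c.IsProper)
    (hs : IsBlandStep n (NB n) c.policy π') :
    (c.setLevel (k + 1) (.skip, (c.level (k + 1)).2)).Represents π' := by
  have hkn := h.carry.succ_le
  have hpow := two_le_two_pow (i := k + 1) (by omega)
  have henter := hc.valA_of_enter (by omega) (by omega) (h.carry.fst_eq_enter h.carry.lt le_rfl)
  exact hc.represents_skip hs (by omega) (by omega) (h.optimalBelow hc) henter.ge
    (by linarith [h.valA_of_lt hc h.carry.lt le_rfl, h.valT_eq hc])

theorem Boarding.step_skip_one (h : c.Boarding 0 1 K) (hc : c.IsProper)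
    (hs : IsBlandStep n (NB n) c.policy π') : PolicyInvariant n (K + 2) π' := by
  have hrep := h.represents_skip hc hs
  have hT := h.valT_setLevel hc le_rfl hrep.1
  refine ⟨_, hrep, .leaving ⟨h.carry.succ_le, h.travel_eq, by rw [setLevel_level_self], ?_,
    h.carry.regular_skip, by linarith [h.valT_le]⟩⟩
  rw [setLevel_level_of_ne (by omega), h.carry.fst_succ]

theorem Boarding.step_skip (h : c.Boarding (k + 1) (k + 2) K) (hc : c.IsProper)
    (hs : IsBlandStep n (NB n) c.policy π') : PolicyInvariant n (K + 2) π' := by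
  have hkn := h.carry.succ_le
  have hrep := h.represents_skip hc hs
  have hT := h.valT_setLevel hc le_rfl hrep.1
  set c' := c.setLevel (k + 1 + 1) (.skip, (c.level (k + 1 + 1)).2)
  have hlevel : ∀ j, j ≠ k + 2 → c'.level j = c.level j := fun j => setLevel_level_of_ne
  have hlow : ∀ j, 1 ≤ j → j ≤ k + 1 → c'.level j = (.board, .leave) :=
    fun j h1 hj => (hlevel j (by omega)).trans (h.carry.boarded j h1 hj)
  have hlk := hlow (k + 1) (by omega) le_rfl
  have hlk' : c'.level (k + 2) = (.skip, .stay) := by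
    rw [setLevel_level_self, h.carry.level_eq]
  have hfst : (c'.level (k + 2 + 1)).1 = .enter := by rw [hlevel _ (by omega), h.carry.fst_succ]
  have hreg : c'.Regular (k + 1) := h.carry.regular_skip.cons (by rw [hlk, hlk']; rfl)
  have hBA : c'.valB (k + 1) = c'.valA (k + 2) :=
    hrep.1.valB_of_leave (by omega) (by omega) (by rw [hlk])
  have hAA := hrep.1.valA_of_skip (i := k + 2) (by omega) (by omega) (by rw [hlk'])
  have hTA : c'.valT = c'.valA (k + 2 + 1) := by
    rw [hrep.1.valT_eq]
    exact congrArg _ h.travel_eq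
  exact ⟨c', hrep, .staying (k := k) (m := k + 2) ⟨h.travel_eq, by omega, hkn,
    fun j h1 hj => by rw [hlow j h1 (by omega)], fun j h1 hj => by rw [hlow j h1 (by omega)],
    by rw [hlk'], hfst, hreg, by linarith, by linarith [h.valT_le]⟩⟩

theorem Boarding.step (h : c.Boarding k m K) (hc : c.IsProper)
    (hs : IsBlandStep n (NB n) c.policy π') : PolicyInvariant n (K + 2) π' := by
  obtain hk | rfl := (Nat.succ_le_of_lt h.carry.lt).lt_or_eq
  · exact h.step_board hc hs hk
  · cases k with
    | zero => exact h.step_skip_one hc hs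
    | succ k => exact h.step_skip hc hs

end Boarding

section Staying

variable {K : ℚ} {k m : ℕ}

theorem Regular.step_enter_one (hr : c.Regular 1) (hc : c.IsProper)
    (hs : IsBlandStep n (NB n) c.policy π') (hA : ∀ j, 1 ≤ j → j ≤ n → c.valA j ≤ c.valT)
    (htravel : 2 ≤ c.travel) (hboard : (c.level c.travel).1 ≠ .board)
    (hl : c.level 1 ≠ (.skip, .stay)) (hTB : c.valT ≤ c.valB 1) (hB : c.valB 1 ≤ K) :
    PolicyInvariant n (K + 2) π' := by
  have hn : 1 ≤ n := hc.one_le_travel.trans hc.travel_le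
  have hrep := hc.represents_enter hs le_rfl hn (optimalBelow_one hA)
    (by linarith [hA 1 le_rfl hn])
  set c' := c.setLevel 1 (.enter, (c.level 1).2)
  have hl' : c'.level 1 = (.enter, (c.level 1).2) := setLevel_level_self
  have hlevel : ∀ j, j ≠ 1 → c'.level j = c.level j := fun j => setLevel_level_of_ne
  have hB' := hr.valB_congr hc hrep.1 le_rfl hn (fun j hj _ => hlevel j (by omega)) (by rw [hl'])
  have hA' := hrep.1.valA_of_enter le_rfl (by omega) (by rw [hl'])
  have hT' : c'.valT = c.valT := (hr.mono (q' := 2) (by omega)).valT_congr hc hrep.1 (by omega)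
    (fun j hj _ => hlevel j (by omega)) rfl htravel hboard
  refine ⟨c', hrep, .returning ⟨by rw [hl'], ?_, by linarith, by linarith⟩⟩
  exact hr.setLevel (by omega) fun _ => (hr 1 le_rfl hn).enter hl

theorem Staying.valA_of_lt (h : c.Staying k m K) (hc : c.IsProper) (h1 : 1 ≤ j) (hj : j < m) :
    c.valA j = c.valT - 2 ^ j + 5 / 4 :=
  hc.valA_of_board h1 (by have := h.succ_le; omega) (h.boarded j h1 hj)

theorem Staying.valB_of_le (h : c.Staying k m K) (hc : c.IsProper) (h1 : 1 ≤ j) (hj : j ≤ k) :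
    c.valB j = c.valT - 2 ^ (j + 1) + 5 / 4 := by
  have hk := h.lt
  have hmn := h.succ_le
  rw [hc.valB_of_leave h1 (by omega) (h.leaving j h1 hj),
    h.valA_of_lt hc (j := j + 1) (by omega) (by omega)]

theorem Staying.valA_le_valT (h : c.Staying k m K) (hc : c.IsProper) (h1 : 1 ≤ j) (hj : j ≤ n) :
    c.valA j ≤ c.valT := by
  have hk := h.lt
  obtain hjm | hmj := lt_or_ge j m
  · linarith [h.valA_of_lt hc h1 hjm, two_le_two_pow h1]
  · have hA : c.valA m = c.valT := by
      rw [hc.valA_of_skip (by omega) (by omega) h.fst_eq, hc.valT_eq, h.travel_eq]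
    exact (h.regular.mono (by omega)).valA_le_valT hc (by omega) (by simp [h.fst_eq]) hA.le hmj
      (by omega)

theorem Staying.optimalBelow (h : c.Staying k m K) (hc : c.IsProper) : c.OptimalBelow k where
  valA_le _ h1 hj := h.valA_le_valT hc h1 hj
  levelOptimal j h1 hj := by
    have hk := h.lt
    have hpow := two_le_two_pow h1
    have hpow' := pow_succ (2 : ℚ) j
    have hpow'' := pow_succ (2 : ℚ) (j + 1)
    have hA := h.valA_of_lt hc h1 (by omega)
    have hA' := h.valA_of_lt hc (j := j + 1) (by omega) (by omega)
    have hB := h.valB_of_le hc h1 hj.le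
    have hB' := h.valB_of_le hc (j := j + 1) (by omega) hj
    exact levelOptimal_of_le (by linarith) (by linarith) hA.ge (by linarith) (by linarith)

theorem Staying.fst_travel_ne_board (h : c.Staying k m K) : (c.level c.travel).1 ≠ .board := by
  simp [h.travel_eq, h.fst_succ]

theorem Staying.step_stay (h : c.Staying (k + 1) m K) (hc : c.IsProper)
    (hs : IsBlandStep n (NB n) c.policy π') : PolicyInvariant n (K + 2) π' := by
  have hk := h.lt
  have hmn := h.succ_le
  have hpow := two_le_two_pow (i := k + 1) (by omega)
  have hpow' := pow_succ (2 : ℚ) (k + 1)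
  have hA := h.valA_of_lt hc (j := k + 1) (by omega) (by omega)
  have hA' := h.valA_of_lt hc (j := k + 1 + 1) (by omega) hk
  have hB := h.valB_of_le hc (j := k + 1) (by omega) le_rfl
  have hTB := h.valT_le_valB
  have hrep := hc.represents_stay hs (by omega) (by omega) (h.optimalBelow hc) (by linarith)
    (by linarith) hA.ge (by linarith)
  set c' := c.setLevel (k + 1) ((c.level (k + 1)).1, .stay)
  have hl' : c'.level (k + 1) = (.board, .stay) := by
    rw [setLevel_level_self, h.boarded (k + 1) (by omega) (by omega)]
  have hfst : ∀ j, (c'.level j).1 = (c.level j).1 := fun j => setLevel_level_fst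
  have hlevel : ∀ j, j ≠ k + 1 → c'.level j = c.level j := fun j => setLevel_level_of_ne
  have hlevel' : ∀ j, k + 2 ≤ j → j ≤ n → c'.level j = c.level j :=
    fun j hj _ => hlevel j (by omega)
  have hreg' : c'.Regular (k + 1) := by
    refine (h.regular.setLevel (by omega) (by omega)).cons ?_
    rw [hl']
    exact (hfst _).trans (h.boarded (k + 1 + 1) (by omega) hk)
  have hT' : c'.valT = c.valT := h.regular.valT_congr hc hrep.1 (by omega) hlevel' rfl
    (by rw [h.travel_eq]; omega) h.fst_travel_ne_board
  have hB' := (h.regular.val_congr hc hrep.1 (by omega) hlevel' le_rfl (by omega)).1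
  have hB'' := hrep.1.valB_of_stay (i := k + 1) (by omega) (by omega) (by rw [hl'])
  refine ⟨c', hrep, .staying (k := k) (m := m) ⟨h.travel_eq, by omega, hmn,
    fun j h1 hj => (hfst j).trans (h.boarded j h1 hj),
    fun j h1 hj => by rw [hlevel j (by omega), h.leaving j h1 (by omega)],
    (hfst m).trans h.fst_eq, (hfst _).trans h.fst_succ, hreg', by linarith,
    by linarith [h.valB_le]⟩⟩

theorem Staying.step (h : c.Staying k m K) (hc : c.IsProper)
    (hs : IsBlandStep n (NB n) c.policy π') : PolicyInvariant n (K + 2) π' := by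
  cases k with
  | zero =>
    have hm := h.lt
    exact h.regular.step_enter_one hc hs (fun _ => h.valA_le_valT hc)
      (by rw [h.travel_eq]; omega) h.fst_travel_ne_board
      (fun hl => by simpa [hl] using h.boarded 1 le_rfl (by omega)) h.valT_le_valB h.valB_le
  | succ k => exact h.step_stay hc hs

end Staying

section Leaving

variable {K : ℚ}

theorem Leaving.step_leave (h : c.Leaving K) (hc : c.IsProper)
    (hs : IsBlandStep n (NB n) c.policy π') (hA : ∀ j, 1 ≤ j → j ≤ n → c.valA j ≤ c.valT)
    (hl : (c.level 1).2 = .stay) : PolicyInvariant n (K + 2) π' := by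
  have hn := h.two_le
  have hA₁ : c.valA 1 = c.valA 2 := hc.valA_of_skip le_rfl (by omega) h.fst_one
  have hA₂ := hc.valA_of_enter (by omega) (by omega) h.fst_two
  have hB₁ : c.valB 1 = 3 / 4 + c.valB 2 := hc.valB_of_stay le_rfl (by omega) hl
  have hT : c.valT = c.valA 2 := by rw [hc.valT_eq, h.travel_eq]
  have hrep := hc.represents_leave hs le_rfl (by omega) (optimalBelow_one hA) (by linarith)
    hA₁.ge (by linarith) hB₁.ge
    (show c.valB 1 < c.valA 2 by linarith)
  have hfst : ∀ j, ((c.setLevel 1 ((c.level 1).1, .leave)).level j).1 = (c.level j).1 :=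
    fun j => setLevel_level_fst
  have hT' := (h.regular.mono (q' := 2) (by omega)).valT_congr hc hrep.1 (by omega)
    (fun j hj _ => setLevel_level_of_ne (by omega)) rfl h.travel_eq.ge
    (by simp [h.travel_eq, h.fst_two])
  refine ⟨_, hrep, .leaving ⟨hn, h.travel_eq, (hfst 1).trans h.fst_one,
    (hfst 2).trans h.fst_two, h.regular.setLevel (by omega) fun _ => ?_,
    by linarith [h.valT_le]⟩⟩
  rw [h.fst_one]
  exact .inl h.fst_two

theorem Leaving.step (h : c.Leaving K) (hc : c.IsProper)
    (hs : IsBlandStep n (NB n) c.policy π') : PolicyInvariant n (K + 2) π' := by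
  have hn := h.two_le
  have hT : c.valT = c.valA 2 := by rw [hc.valT_eq, h.travel_eq]
  have hA₁ : c.valA 1 = c.valA 2 := hc.valA_of_skip le_rfl (by omega) h.fst_one
  have hA : ∀ j, 1 ≤ j → j ≤ n → c.valA j ≤ c.valT := fun j h1 hj =>
    h.regular.valA_le_valT hc le_rfl (by simp [h.fst_one]) (by linarith) h1 (by omega)
  cases hl : (c.level 1).2
  · exact h.step_leave hc hs hA hl
  · have hB : c.valB 1 = c.valA 2 := hc.valB_of_leave le_rfl (by omega) hl
    exact h.regular.step_enter_one hc hs hA h.travel_eq.ge (by simp [h.travel_eq, h.fst_two])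
      (fun h' => by simp [h'] at hl) (by linarith) (by linarith [h.valT_le])

theorem Returning.step (h : c.Returning K) (hc : c.IsProper)
    (hs : IsBlandStep n (NB n) c.policy π') : PolicyInvariant n (K + 2) π' := by
  have hn : 1 ≤ n := hc.one_le_travel.trans hc.travel_le
  have hboard : (c.level 1).1 ≠ .board := by simp [h.fst_one]
  have hrep := hc.represents_setTravel hs le_rfl hn (by omega) h.valT_lt
  have hA := (h.regular.val_congr hc hrep.1 le_rfl (fun _ _ _ => rfl) le_rfl (by omega)).2 hboard
  have hT : (c.setTravel 1).valT = (c.setTravel 1).valA 1 := hrep.1.valT_eq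
  exact ⟨_, hrep, .counting ⟨rfl, hboard, h.regular, by linarith [h.valA_le]⟩⟩

theorem Invariant.step (h : c.Invariant K) (hc : c.IsProper)
    (hs : IsBlandStep n (NB n) c.policy π') : PolicyInvariant n (K + 2) π' := by
  obtain h | h | h | h | h | h := h <;> exact h.step hc hs

theorem Invariant.valT_le (h : c.Invariant K) : c.valT ≤ K := by
  obtain h | h | h | h | h | h := h
  exacts [h.valT_le, h.valT_le, h.valT_le, h.valT_le_valB.trans h.valB_le, h.valT_le,
    h.valT_lt.le.trans h.valA_le]

end Leaving

/-! ### Start and termination -/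

/-- The configuration of the canonical policy for `0`. -/
def initial (n : ℕ) : Config n :=
  ⟨1, fun _ => (.skip, .leave)⟩

theorem policy_initial : (initial n).policy = pi0 n := by
  funext u
  cases u <;> rfl

theorem exists_iterate_policy_initial (h1 : 1 ≤ i) (hi : i ≤ n + 1) :
    ∃ k, (initial n).policy^[k] (aN n i) = BV.s := by
  induction hi using Nat.decreasingInduction with
  | self => exact ⟨0, aN_last⟩
  | of_succ i hi ih =>
    obtain ⟨k, hk⟩ := ih (by omega)
    refine ⟨k + 1, ?_⟩
    rwa [aN_of_le (by omega), Function.iterate_succ_apply]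

theorem isProper_initial (hn : 1 ≤ n) : (initial n).IsProper where
  one_le_travel := le_rfl
  travel_le := hn
  level_last := rfl
  weakUnichain := by
    rintro (_ | _ | _ | i | i) hi
    · obtain ⟨k, hk⟩ := exists_iterate_policy_initial (n := n) le_rfl (by omega)
      rw [aN_of_le hn] at hk
      exact ⟨k + 1, hk⟩
    · exact ⟨0, rfl⟩
    · exact ⟨1, rfl⟩
    all_goals
      obtain ⟨k, hk⟩ := exists_iterate_policy_initial (i := i + 1) (by omega)
        (Nat.succ_le_succ hi.2)
      exact ⟨k + 1, hk⟩

theorem valA_initial (h1 : 1 ≤ i) (hi : i ≤ n + 1) : (initial n).valA i = 0 := by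
  induction hi using Nat.decreasingInduction with
  | self => exact valA_last
  | of_succ i hi ih =>
    rw [(isProper_initial (by omega)).valA_of_skip h1 (by omega) rfl, ih (by omega)]

theorem policyInvariant_pi0 (hn : 1 ≤ n) : PolicyInvariant n 0 (pi0 n) := by
  have hc := isProper_initial hn
  refine ⟨initial n, ⟨hc, policy_initial⟩, .counting ⟨rfl, by simp [initial], ?_, ?_⟩⟩
  · exact fun _ _ _ => .inr rfl
  · rw [hc.valT_eq]
    exact (valA_initial hc.one_le_travel (hc.travel_le.trans n.le_succ)).le

theorem PolicyInvariant.step {K : ℚ} {π π' : BV → BV} (h : PolicyInvariant n K π)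
    (hs : IsBlandStep n (NB n) π π') : PolicyInvariant n (K + 2) π' := by
  obtain ⟨c, ⟨hc, rfl⟩, h⟩ := h
  exact h.step hc hs

theorem two_pow_sub_le_valA (hopt : ∀ u v, ¬ BImproving n c.policy u v) (h1 : 1 ≤ i)
    (hi : i ≤ n + 1) : (2 : ℚ) ^ (n + 1) - 2 ^ i ≤ c.valA i := by
  induction hi using Nat.decreasingInduction with
  | self => rw [valA_last, sub_self]
  | of_succ i hi ih =>
    have hin : 1 ≤ i ∧ i ≤ n := by omega
    have henter : 2 ^ i + c.valB i ≤ c.valA i :=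
      not_lt.1 fun h => hopt _ _ ((bImproving_aTarget_iff hin (x := .enter)).2 h)
    have hleave : c.valA (i + 1) ≤ c.valB i :=
      not_lt.1 fun h => hopt _ _ ((bImproving_bTarget_iff hin (y := .leave)).2 h)
    linarith [ih (by omega), pow_succ (2 : ℚ) i]

theorem PolicyInvariant.two_pow_sub_two_le {K : ℚ} {π : BV → BV} (h : PolicyInvariant n K π)
    (hopt : ∀ u v, ¬ BImproving n π u v) : (2 : ℚ) ^ (n + 1) - 2 ≤ K := by
  obtain ⟨c, ⟨hc, rfl⟩, h⟩ := h
  have hn : 1 ≤ n := hc.one_le_travel.trans hc.travel_le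
  calc (2 : ℚ) ^ (n + 1) - 2 = 2 ^ (n + 1) - 2 ^ 1 := by rw [pow_one]
    _ ≤ c.valA 1 := two_pow_sub_le_valA hopt le_rfl (by omega)
    _ ≤ c.valT := not_lt.1 fun hlt => hopt _ _ (bImproving_travel_iff.2 ⟨⟨le_rfl, hn⟩, hlt⟩)
    _ ≤ K := h.valT_le

end Config

/-- Bland's policy iteration on `𝔅_n` started at `π_0` performs at least `2^n - 1`
improving switches before terminating. -/
theorem stmt1 (n : ℕ) (hn : 1 ≤ n) (f : ℕ → (BV → BV)) (m : ℕ)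
    (h0 : f 0 = pi0 n)
    (hstep : ∀ k < m, IsBlandStep n (NB n) (f k) (f (k + 1)))
    (hterm : ∀ u v, ¬ BImproving n (f m) u v) :
    2 ^ n - 1 ≤ m := by
  have hinv : ∀ k ≤ m, Config.PolicyInvariant n (2 * k) (f k) := by
    intro k hk
    induction k with
    | zero => simpa [h0] using Config.policyInvariant_pi0 hn
    | succ k ih => simpa [mul_add] using (ih (by omega)).step (hstep k hk)
  have hvalue : (2 : ℚ) ^ (n + 1) - 2 ≤ 2 * m := (hinv m le_rfl).two_pow_sub_two_le hterm
  have hpow : (2 : ℚ) ^ n ≤ m + 1 := by linarith [pow_succ (2 : ℚ) n]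
  exact Nat.sub_le_of_le_add (by exact_mod_cast hpow)
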